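/- Let (R, m) be an analytically unramified Noetherian local ring with conductor ideal 𝔠, and suppose R is seminormal, i.e. R is reduced and for all b, c ∈ R with b^3 = c^2 there exists a ∈ R with a^2 = b and a^3 = c. If Ext^i_R(𝔠, 𝔠) = 0 for some i > 0, then 𝔠 is a free R-module and R is normal. -/

import Mathlib

open CategoryTheory IsLocalRing

set_option synthInstance.maxHeartbeats 1000000
set_option maxHeartbeats 1000000

noncomputable section

/-- The integral closure `R̄` of `R` in its total ring of fractions, viewed as a type
(with its canonical `R`-algebra and `R`-module structures). -/
abbrev IntClosure (R : Type) [CommRing R] : Type :=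
  ↥(integralClosure R (FractionRing R))

/-- The quotient `R`-module `R̄/R`. -/
abbrev IntClosureQuot (R : Type) [CommRing R] : Type :=
  IntClosure R ⧸ LinearMap.range (Algebra.linearMap R (IntClosure R))

/-- The conductor ideal `𝔠 = Ann_R(R̄/R) = {r : R | r • R̄ ⊆ R}`. -/
def conductorIdeal (R : Type) [CommRing R] : Ideal R :=
  Module.annihilator R (IntClosureQuot R)

/-- A local ring `R` is analytically unramified if its `m`-adic completion is reduced. -/
def AnalyticallyUnramified (R : Type) [CommRing R] [IsLocalRing R] : Prop :=
  IsReduced (AdicCompletion (maximalIdeal R) R)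

/-- `R` is normal: it is reduced and equal to its integral closure `R̄` in its total
ring of fractions. -/
def IsNormalRing (R : Type) [CommRing R] : Prop :=
  IsReduced R ∧ integralClosure R (FractionRing R) = ⊥

/-- `Ext^i_R(M, N)` as a type. -/
abbrev ExtMod (R : Type) [CommRing R] (M : Type) [AddCommGroup M] [Module R M]
    (N : Type) [AddCommGroup N] [Module R N] (i : ℕ) : Type :=
  ↥(((Ext R (ModuleCat.{0} R) i).obj (Opposite.op (ModuleCat.of R M))).obj (ModuleCat.of R N))

/-- `M` has finite projective dimension over `R`:
`Ext^i_R(M, -)` vanishes for all `i` bigger than some `n`. -/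
def HasFiniteProjDim (R : Type) [CommRing R] (M : Type) [AddCommGroup M] [Module R M] : Prop :=
  ∃ n : ℕ, ∀ (N : ModuleCat.{0} R) (i : ℕ), n < i →
    Subsingleton ↥(((Ext R (ModuleCat.{0} R) i).obj (Opposite.op (ModuleCat.of R M))).obj N)

/-- `M` has finite injective dimension over `R`:
`Ext^i_R(-, M)` vanishes for all `i` bigger than some `n`. -/
def HasFiniteInjDim (R : Type) [CommRing R] (M : Type) [AddCommGroup M] [Module R M] : Prop :=
  ∃ n : ℕ, ∀ (N : ModuleCat.{0} R) (i : ℕ), n < i →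
    Subsingleton ↥(((Ext R (ModuleCat.{0} R) i).obj (Opposite.op N)).obj (ModuleCat.of R M))

/-- The depth of an `R`-module `M` over a local ring `(R, m)`: the least `i` such that
`Ext^i_R(R/m, M) ≠ 0` (`⊤` if there is no such `i`), valued in `WithBot (WithTop ℕ)`
for easy comparison with `ringKrullDim`. -/
def moduleDepth (R : Type) [CommRing R] [IsLocalRing R]
    (M : Type) [AddCommGroup M] [Module R M] : WithBot (WithTop ℕ) :=
  sInf { n : WithBot (WithTop ℕ) |
    ∃ i : ℕ, n = (i : ℕ) ∧ Nontrivial (ExtMod R (ResidueField R) M i) }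

/-- A Noetherian local ring is Gorenstein if it has finite injective dimension
as a module over itself. -/
def IsGorensteinLocal (R : Type) [CommRing R] [IsLocalRing R] : Prop :=
  IsNoetherianRing R ∧ HasFiniteInjDim R R

/-- A Noetherian local ring is Cohen–Macaulay if its depth equals its Krull dimension. -/
def IsCohenMacaulayLocal (R : Type) [CommRing R] [IsLocalRing R] : Prop :=
  IsNoetherianRing R ∧ moduleDepth R R = ringKrullDim R

/-- A ring is Cohen–Macaulay if it is Noetherian and all its localizations at primes
are Cohen–Macaulay local rings. -/
def IsCohenMacaulayRing (A : Type) [CommRing A] : Prop :=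
  IsNoetherianRing A ∧ ∀ (p : Ideal A) [p.IsPrime],
    moduleDepth (Localization.AtPrime p) (Localization.AtPrime p) =
      ringKrullDim (Localization.AtPrime p)

/-- Serre's condition `(S2)`: `depth (R_p) ≥ min {2, height p}` for every prime `p`
(`height p` being the dimension of `R_p`). -/
def SerreS2 (R : Type) [CommRing R] : Prop :=
  ∀ (p : Ideal R) [p.IsPrime],
    min 2 (ringKrullDim (Localization.AtPrime p)) ≤
      moduleDepth (Localization.AtPrime p) (Localization.AtPrime p)

/-- A Noetherian local ring is regular if its maximal ideal can be generated by
`dim R` elements. -/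
def IsRegularLocal (A : Type) [CommRing A] [IsLocalRing A] : Prop :=
  IsNoetherianRing A ∧ ∃ s : Finset A, Ideal.span (s : Set A) = maximalIdeal A ∧
    (s.card : WithBot (WithTop ℕ)) = ringKrullDim A

/-- Serre's condition `(R1)`: `R_p` is regular for every prime `p` of height at most `1`. -/
def SerreR1 (R : Type) [CommRing R] : Prop :=
  ∀ (p : Ideal R) [p.IsPrime], ringKrullDim (Localization.AtPrime p) ≤ 1 →
    IsRegularLocal (Localization.AtPrime p)

/-- The `i`-th local cohomology `H^i_m(M)` of `M` with support in the maximal ideal,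
as a type. -/
abbrev localCohMod (R : Type) [CommRing R] [IsLocalRing R] (i : ℕ)
    (M : Type) [AddCommGroup M] [Module R M] : Type :=
  ↥((localCohomology (maximalIdeal R) i).obj (ModuleCat.of R M))

/-- `x : Fin d → R` is a system of parameters for the local ring `(R, m)`:
`d = dim R`, all `x i` lie in `m`, and the ideal they generate is `m`-primary
(its radical is `m`). -/
def IsSystemOfParameters (R : Type) [CommRing R] [IsLocalRing R] {d : ℕ}
    (x : Fin d → R) : Prop :=
  (d : WithBot (WithTop ℕ)) = ringKrullDim R ∧ (∀ i, x i ∈ maximalIdeal R) ∧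
    (Ideal.span (Set.range x)).radical = maximalIdeal R

/-- `E` is an injective hull of the residue field of the local ring `R`:
`E` is injective and contains a copy of `R/m` as an essential submodule. -/
def IsInjectiveHullOfResidueField (R : Type) [CommRing R] [IsLocalRing R]
    (E : Type) [AddCommGroup E] [Module R E] : Prop :=
  Module.Injective R E ∧ ∃ f : ResidueField R →ₗ[R] E, Function.Injective f ∧
    ∀ N : Submodule R E, N ≠ ⊥ → N ⊓ LinearMap.range f ≠ ⊥

/-!
Suppose `𝔠 ≠ R`. Seminormality makes `𝔠` a radical ideal, so `𝔠 R_p = p R_p` for a prime `p`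
minimal over `𝔠`. Let `Ω` be the `(i - 1)`-st syzygy of `𝔠`. The hypothesis becomes
`Ext¹(Ω, 𝔠) = 0`, that is, every map `Ω → R ⧸ 𝔠` lifts to `R`; after localizing at `p` this says
that every functional on `Ω_p` with values in the residue field lifts to `R_p`, and so `Ω_p` is
free. Since `R̄` is finite over `R`, there are a nonzerodivisor `x ∈ 𝔠` and `b ∈ R̄` with
`b ∉ R_p`. Then `s = x b` lies in `R` and is a nonzero socle element of `R_p ⧸ x R_p`, so `R_p` has
depth one and freeness ascends from each syzygy of `𝔠_p` to the preceding one, until `𝔠_p` itself is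
free. This contradicts `s 𝔠 = x b 𝔠 ⊆ x 𝔠`, because `x ∤ s` in `R_p`. Hence `𝔠 = R`.

For the finiteness of `R̄`, a complete local domain is finite over a power series ring over a field
or a complete discrete valuation ring. Such a base is N-2, by Tate's argument: if `A` is a normal
Noetherian domain, complete with respect to a prime element `x`, and `A ⧸ x` is N-2, then so is `A`.
A reduced complete ring embeds into the product of its quotients by the minimal primes, and
finiteness descends along the faithfully flat map from `R` to its completion.
-/

section AdicCompleteness

theorem isPrecomplete_pi_fin {A : Type*} [CommRing A] (I : Ideal A) [IsPrecomplete I A] (n : ℕ) :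
    IsPrecomplete I (Fin n → A) := by
  rw [← AdicCompletion.of_surjective_iff]
  intro x
  choose r hr using fun j ↦ AdicCompletion.of_surjective I A (AdicCompletion.piEquivFin I n x j)
  refine ⟨r, (AdicCompletion.piEquivFin I n).injective (funext fun j ↦ ?_)⟩
  rw [← hr j, AdicCompletion.piEquivFin_apply]
  exact AdicCompletion.map_of I (LinearMap.proj j : (Fin n → A) →ₗ[A] A) r

theorem module_finite_of_isPrecomplete {A : Type*} [CommRing A] (I : Ideal A) [IsPrecomplete I A]
    (M : Type*) [AddCommGroup M] [Module A M] [IsHausdorff I M]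
    [Module.Finite A (M ⧸ (I • ⊤ : Submodule A M))] : Module.Finite A M := by
  obtain ⟨n, f, hf⟩ := Module.Finite.exists_fin' A (M ⧸ (I • ⊤ : Submodule A M))
  obtain ⟨g, hg⟩ := Module.projective_lifting_property (Submodule.mkQ (I • ⊤ : Submodule A M)) f
    (Submodule.mkQ_surjective _)
  have := isPrecomplete_pi_fin I n
  exact Module.Finite.of_surjective g
    (surjective_of_mkQ_comp_surjective (I := I) (by rw [hg]; exact hf))

theorem exists_powerSeries_ringHom {A D : Type*} [CommRing A] [CommRing D] (φ : A →+* D)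
    (I : Ideal D) [IsAdicComplete I D] {x : D} (hx : x ∈ I) :
    ∃ ψ : PowerSeries A →+* D, ψ.comp PowerSeries.C = φ ∧ ψ PowerSeries.X = x := by
  let : UniformSpace A := ⊥
  have : DiscreteUniformity A := ⟨rfl⟩
  let : WithIdeal D := ⟨I⟩
  have hI : IsAdic I := rfl
  obtain ⟨_, _⟩ := hI.isAdicComplete_iff.1 ‹_›
  have hφ : Continuous φ := continuous_of_discreteTopology
  have heval : PowerSeries.HasEval x :=
    hI.hasBasis_nhds_zero.tendsto_right_iff.2 fun n _ ↦ Filter.eventually_atTop.2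
      ⟨n, fun _ hm ↦ Ideal.pow_le_pow_right hm (Ideal.pow_mem_pow hx _)⟩
  refine ⟨PowerSeries.eval₂Hom hφ heval, RingHom.ext fun a ↦ ?_, ?_⟩
  · simp [PowerSeries.coe_eval₂Hom]
  · simp [PowerSeries.coe_eval₂Hom]

end AdicCompleteness

section PowerSeriesNormal

open PowerSeries

variable {A : Type*} [CommRing A]

theorem exists_eq_X_pow_mul_of_ne_zero {d : A⟦X⟧} (hd : d ≠ 0) :
    ∃ (m : ℕ) (e : A⟦X⟧), constantCoeff e ≠ 0 ∧ d = X ^ m * e := by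
  obtain ⟨e, he⟩ := X_pow_order_dvd (φ := d)
  have hcoeff := congrArg (coeff d.order.toNat) he
  rw [coeff_X_pow_mul', if_pos le_rfl, Nat.sub_self, coeff_zero_eq_constantCoeff] at hcoeff
  exact ⟨_, e, hcoeff ▸ coeff_order hd, he⟩

theorem isAlmostIntegral_constantCoeff [IsDomain A] {S : Type*} [CommRing S] [Algebra A S]
    {f : S⟦X⟧} (hf : IsAlmostIntegral A⟦X⟧ f) : IsAlmostIntegral A (constantCoeff f) := by
  obtain ⟨d, hd, hdf⟩ := hf
  obtain ⟨m, e, he, rfl⟩ := exists_eq_X_pow_mul_of_ne_zero (nonZeroDivisors.ne_zero hd)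
  refine ⟨constantCoeff e, mem_nonZeroDivisors_of_ne_zero he, fun n ↦ ?_⟩
  obtain ⟨r, hr⟩ := hdf n
  refine ⟨coeff m r, ?_⟩
  have hcoeff := congrArg (coeff m) hr
  rw [Algebra.smul_def, algebraMap_apply'', algebraMap_apply'', coeff_map] at hcoeff
  rw [hcoeff, map_mul (PowerSeries.map _), map_pow (PowerSeries.map _), map_X, mul_assoc,
    coeff_X_pow_mul', if_pos le_rfl, Nat.sub_self, coeff_zero_eq_constantCoeff_apply, map_mul,
    map_pow, ← coeff_zero_eq_constantCoeff_apply (PowerSeries.map _ e), coeff_map,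
    coeff_zero_eq_constantCoeff_apply, Algebra.smul_def]

theorem isAlmostIntegral_shift {S : Type*} [CommRing S] [Algebra A S] {f : S⟦X⟧}
    (hf : IsAlmostIntegral A⟦X⟧ (X * f)) : IsAlmostIntegral A⟦X⟧ f := by
  obtain ⟨d, hd, hdf⟩ := hf
  refine ⟨d, hd, fun n ↦ ?_⟩
  obtain ⟨r, hr⟩ := hdf n
  refine ⟨mk fun k ↦ coeff (n + k) r, PowerSeries.ext fun k ↦ ?_⟩
  have hcoeff := congrArg (coeff (n + k)) hr
  rw [algebraMap_apply'', coeff_map] at hcoeff ⊢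
  rw [coeff_mk, hcoeff, mul_pow, ← mul_smul_comm, coeff_X_pow_mul', if_pos (Nat.le_add_right n k),
    Nat.add_sub_cancel_left]

theorem isAlmostIntegral_C [IsDomain A] {S : Type*} [CommRing S] [Algebra A S] {s : S}
    (hs : IsAlmostIntegral A s) : IsAlmostIntegral A⟦X⟧ (C s : S⟦X⟧) := by
  obtain ⟨d, hd, hds⟩ := hs
  refine ⟨C d, mem_nonZeroDivisors_of_ne_zero ?_, fun n ↦ ?_⟩
  · exact (map_ne_zero_iff _ C_injective).2 (nonZeroDivisors.ne_zero hd)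
  · obtain ⟨r, hr⟩ := hds n
    exact ⟨C r, by simp [Algebra.smul_def, algebraMap_apply'', map_C, hr]⟩

theorem isAlmostIntegral_powerSeries_coeff [IsDomain A] {S : Type*} [CommRing S] [Algebra A S]
    {f : S⟦X⟧} (hf : IsAlmostIntegral A⟦X⟧ f) (n : ℕ) : IsAlmostIntegral A (coeff n f) := by
  induction n generalizing f with
  | zero => simpa using isAlmostIntegral_constantCoeff hf
  | succ n ih =>
    have hconst := isAlmostIntegral_C (isAlmostIntegral_constantCoeff hf)
    obtain ⟨g, hg⟩ : X ∣ f - C (constantCoeff f) := X_dvd_iff.2 (by simp)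
    have hXg : IsAlmostIntegral A⟦X⟧ (X * g) :=
      hg ▸ (completeIntegralClosure A⟦X⟧ S⟦X⟧).sub_mem hf hconst
    have hfg : coeff (n + 1) f = coeff n g := by
      rw [← coeff_succ_X_mul n g, ← hg, map_sub, coeff_succ_C, sub_zero]
    exact hfg ▸ ih (isAlmostIntegral_shift hXg)

instance isIntegrallyClosed_powerSeries [IsDomain A] [IsNoetherianRing A] [IsIntegrallyClosed A] :
    IsIntegrallyClosed A⟦X⟧ := by
  let K := FractionRing A
  let L := FractionRing K⟦X⟧
  rw [isIntegrallyClosed_iff (FractionRing A⟦X⟧)]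
  intro y hy
  have hinj : Function.Injective (algebraMap A⟦X⟧ K⟦X⟧) :=
    map_injective _ (IsFractionRing.injective A K)
  have hinjL : Function.Injective (algebraMap A⟦X⟧ L) :=
    (IsFractionRing.injective K⟦X⟧ L).comp hinj
  let ι : FractionRing A⟦X⟧ →ₐ[A⟦X⟧] L := IsFractionRing.liftAlgHom (g := Algebra.ofId _ L) hinjL
  obtain ⟨f, hf⟩ := IsIntegrallyClosed.algebraMap_eq_of_integral
    ((hy.map ι).tower_top (A := K⟦X⟧))
  have hfint : IsIntegral A⟦X⟧ f :=
    (isIntegral_algebraMap_iff (IsFractionRing.injective K⟦X⟧ L)).1 (hf ▸ hy.map ι)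
  obtain ⟨a, b, hb, rfl⟩ := IsFractionRing.div_surjective (A := A⟦X⟧) y
  rw [map_div₀, AlgHom.commutes, AlgHom.commutes, eq_div_iff
    (fun h ↦ nonZeroDivisors.ne_zero hb (hinjL (h.trans (map_zero _).symm)))] at hf
  have hmul : algebraMap A⟦X⟧ K⟦X⟧ a = algebraMap A⟦X⟧ K⟦X⟧ b * f :=
    IsFractionRing.injective K⟦X⟧ L (by rw [map_mul, mul_comm]; exact hf.symm)
  have hcoeff (n : ℕ) : ∃ c, algebraMap A K c = coeff n f :=
    IsIntegrallyClosed.algebraMap_eq_of_integral (isAlmostIntegral_powerSeries_coeff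
      (hfint.isAlmostIntegral_of_exists_smul_mem_range
        ⟨b, hb, a, by rw [hmul, Algebra.smul_def]⟩) n).isIntegral
  choose c hc using hcoeff
  have hf : algebraMap A⟦X⟧ K⟦X⟧ (mk c) = f := PowerSeries.ext fun n ↦ by
    rw [algebraMap_apply'', coeff_map, coeff_mk, hc]
  have hab : a = b * mk c := hinj (by rw [map_mul, hf, hmul])
  have hb0 : algebraMap A⟦X⟧ (FractionRing A⟦X⟧) b ≠ 0 :=
    IsFractionRing.to_map_ne_zero_of_mem_nonZeroDivisors hb
  exact ⟨mk c, by rw [hab, map_mul, mul_div_cancel_left₀ _ hb0]⟩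

end PowerSeriesNormal

section Japanese

universe u

/-- The property N-2 (for domains): for every finite extension `L` of the field of fractions of `A`,
the integral closure of `A` in `L` is a finite `A`-module. -/
def IsJapanese (A : Type u) [CommRing A] : Prop :=
  ∀ (K L : Type u) [Field K] [Field L] [Algebra A K] [IsFractionRing A K] [Algebra A L]
    [Algebra K L] [IsScalarTower A K L] [FiniteDimensional K L],
    Module.Finite A (integralClosure A L)

theorem isJapanese_of_field (k : Type u) [Field k] : IsJapanese k := by
  intro K L _ _ _ _ _ _ _ _
  have : Module.Finite k K := Module.Finite.of_surjective (Algebra.linearMap k K)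
    (IsFractionRing.surjective_iff_isField.2 (Field.toIsField k))
  have : Module.Finite k L := Module.Finite.trans K L
  infer_instance

theorem finite_integralClosure_of_injective {A : Type*} [CommRing A] [IsNoetherianRing A]
    {L L' : Type*} [CommRing L] [CommRing L'] [Algebra A L] [Algebra A L'] (f : L →ₐ[A] L')
    (hf : Function.Injective f) [Module.Finite A (integralClosure A L')] :
    Module.Finite A (integralClosure A L) :=
  Module.Finite.of_injective f.mapIntegralClosure.toLinearMap fun _ _ h ↦
    Subtype.ext (hf (congrArg Subtype.val h))

theorem finite_integralClosure_of_isSeparable {A : Type*} [CommRing A] [IsDomain A]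
    [IsNoetherianRing A] (K E L : Type*) [Field K] [Field E] [Field L] [Algebra A K]
    [IsFractionRing A K] [Algebra A E] [Algebra K E] [IsScalarTower A K E] [FiniteDimensional K E]
    [Algebra A L] [Algebra E L] [IsScalarTower A E L] [FiniteDimensional E L]
    [Algebra.IsSeparable E L] [Module.Finite A (integralClosure A E)] :
    Module.Finite A (integralClosure A L) := by
  let C := integralClosure A E
  have : IsIntegrallyClosed C := integralClosure.isIntegrallyClosedOfFiniteExtension K
  have : IsFractionRing C E := integralClosure.isFractionRing_of_finite_extension K E
  have : IsNoetherianRing C := IsNoetherianRing.of_finite A C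
  have : Module.Finite C (integralClosure C L) := IsIntegralClosure.finite C E L _
  have : Module.Finite A (integralClosure C L) := Module.Finite.trans C _
  let f : integralClosure A L →ₗ[A] integralClosure C L :=
    { toFun := fun x ↦ ⟨x, x.2.tower_top⟩
      map_add' := fun _ _ ↦ rfl
      map_smul' := fun _ _ ↦ rfl }
  exact Module.Finite.of_injective f fun _ _ h ↦
    Subtype.ext (congrArg (Subtype.val : integralClosure C L → L) h)

theorem isPurelyInseparable_fixedField_top (K N : Type*) [Field K] [Field N] [Algebra K N]
    [Normal K N] :
    IsPurelyInseparable K (IntermediateField.fixedField (⊤ : Subgroup Gal(N/K))) := by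
  classical
  rw [isPurelyInseparable_iff_natSepDegree_eq_one]
  intro x
  have halg : IsAlgebraic K (x : N) := Algebra.IsAlgebraic.isAlgebraic _
  rw [← minpoly.algebraMap_eq (B' := N) (FaithfulSMul.algebraMap_injective _ N) x,
    Polynomial.natSepDegree_eq_of_splits _ (Normal.splits ‹_› _), Finset.card_eq_one]
  refine ⟨x, Finset.ext fun z ↦ ?_⟩
  rw [Multiset.mem_toFinset, Polynomial.mem_aroots, Finset.mem_singleton]
  constructor
  · rintro ⟨-, hz⟩
    obtain ⟨σ, rfl⟩ := minpoly.exists_algEquiv_of_root' halg hz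
    exact x.2 ⟨σ, trivial⟩
  · rintro rfl
    exact ⟨minpoly.ne_zero halg.isIntegral, minpoly.aeval K _⟩

theorem finite_integralClosure_of_forall_isPurelyInseparable {A : Type u} [CommRing A] [IsDomain A]
    [IsNoetherianRing A] {K : Type u} [Field K] [Algebra A K] [IsFractionRing A K]
    (h : ∀ (E : Type u) [Field E] [Algebra A E] [Algebra K E] [IsScalarTower A K E]
      [FiniteDimensional K E] [IsPurelyInseparable K E], Module.Finite A (integralClosure A E))
    (L : Type u) [Field L] [Algebra A L] [Algebra K L] [IsScalarTower A K L]
    [FiniteDimensional K L] : Module.Finite A (integralClosure A L) := by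
  let N := IntermediateField.normalClosure K L (AlgebraicClosure L)
  let E := IntermediateField.fixedField (⊤ : Subgroup Gal(N/K))
  have : IsPurelyInseparable K E := isPurelyInseparable_fixedField_top K N
  have : IsGalois E N := IsGalois.of_fixed_field N (⊤ : Subgroup Gal(N/K))
  have : IsScalarTower A E N := IsScalarTower.to₁₃₄ A K E N
  have := h E
  have := finite_integralClosure_of_isSeparable (A := A) K E N
  exact finite_integralClosure_of_injective ((IsScalarTower.toAlgHom K L N).restrictScalars A)
    (algebraMap L N).injective

variable {A : Type*} [CommRing A]

theorem eq_zero_of_forall_pow_dvd {u : A} [IsHausdorff (Ideal.span {u}) A] {a : A}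
    (h : ∀ n, u ^ n ∣ a) : a = 0 :=
  IsHausdorff.haus ‹_› a fun n ↦ by
    rw [SModEq.zero, smul_eq_mul, Ideal.mul_top, Ideal.span_singleton_pow]
    exact Ideal.mem_span_singleton.2 (h n)

theorem linearIndependent_of_linearIndependent_mk [IsDomain A] {S : Type*} [CommRing S]
    [Algebra A S] [Module.IsTorsionFree A S] {u : A} (hu : u ≠ 0) [IsHausdorff (Ideal.span {u}) A]
    (P : Ideal S) [P.LiesOver (Ideal.span {u})] {ι : Type*} {s : ι → S}
    (hs : LinearIndependent (A ⧸ Ideal.span {u}) fun i ↦ Ideal.Quotient.mk P (s i)) :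
    LinearIndependent A s := by
  rw [linearIndependent_iff']
  intro t a ha i hi
  refine eq_zero_of_forall_pow_dvd (u := u) fun n ↦ ?_
  induction n generalizing a with
  | zero => simp
  | succ n ih =>
    have hmod : ∀ j ∈ t, u ∣ a j := fun j hj ↦ by
      rw [← Ideal.mem_span_singleton, ← Ideal.Quotient.eq_zero_iff_mem]
      refine linearIndependent_iff'.1 hs t (fun j ↦ Ideal.Quotient.mk _ (a j)) ?_ j hj
      have := congrArg (Ideal.Quotient.mk P) ha
      simpa [Algebra.smul_def] using this
    choose! b hb using hmod
    have husum : u • ∑ j ∈ t, b j • s j = 0 := by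
      rw [Finset.smul_sum, ← ha]
      exact Finset.sum_congr rfl fun j hj ↦ by rw [hb j hj, mul_smul]
    rw [hb i hi, pow_succ']
    exact mul_dvd_mul_left u (ih b ((smul_eq_zero_iff_right hu).1 husum))

theorem finite_quotient_of_le_radical {S : Type*} [CommRing S] [Algebra A S] {I J : Ideal S}
    (hIfg : I.FG) (hJI : J ≤ I) (hIJ : I ≤ J.radical) [Module.Finite A (S ⧸ I)] :
    Module.Finite A (S ⧸ J) := by
  have hker : RingHom.ker (Ideal.Quotient.factorₐ A hJI) = I.map (Ideal.Quotient.mk J) :=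
    Ideal.Quotient.factor_ker hJI
  refine Module.finite_of_surjective_of_ker_le_nilradical (Ideal.Quotient.factorₐ A hJI)
    (Ideal.Quotient.factor_surjective hJI) ?_ (hker ▸ hIfg.map _)
  rw [hker, Ideal.map_le_iff_le_comap, nilradical, Ideal.comap_radical, Ideal.zero_eq_bot,
    ← RingHom.ker_eq_comap_bot, Ideal.mk_ker]
  exact hIJ

section PowMemRange

variable {S : Type*} [CommRing S] [IsDomain S] [Algebra A S] [FaithfulSMul A S]
  {q : ℕ} {u : A} {y : S}

theorem dvd_iff_of_pow_eq_algebraMap [IsIntegrallyClosed S] (hq : q ≠ 0)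
    (hpow : ∀ s : S, ∃ a, algebraMap A S a = s ^ q) (hy : algebraMap A S u = y ^ q)
    {s : S} {a : A} (ha : algebraMap A S a = s ^ q) : y ∣ s ↔ u ∣ a := by
  constructor
  · rintro ⟨t, rfl⟩
    obtain ⟨b, hb⟩ := hpow t
    refine ⟨b, FaithfulSMul.algebraMap_injective A S ?_⟩
    rw [ha, map_mul, hy, hb, mul_pow]
  · rintro ⟨b, rfl⟩
    rw [← IsIntegrallyClosed.pow_dvd_pow_iff hq, ← ha, map_mul, hy]
    exact dvd_mul_right _ _

theorem dvd_algebraMap_iff [IsIntegrallyClosed S] (hq : q ≠ 0)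
    (hpow : ∀ s : S, ∃ a, algebraMap A S a = s ^ q) (hy : algebraMap A S u = y ^ q)
    (hu : Prime u) {a : A} : y ∣ algebraMap A S a ↔ u ∣ a := by
  rw [dvd_iff_of_pow_eq_algebraMap hq hpow hy (map_pow _ a q), hu.dvd_pow_iff_dvd hq]

theorem prime_of_pow_eq_algebraMap [IsIntegrallyClosed S] (hq : q ≠ 0)
    (hpow : ∀ s : S, ∃ a, algebraMap A S a = s ^ q) (hy : algebraMap A S u = y ^ q)
    (hu : Prime u) : Prime y := by
  refine ⟨?_, fun hunit ↦ hu.not_isUnit ?_, fun s t hst ↦ ?_⟩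
  · rintro rfl
    rw [zero_pow hq, FaithfulSMul.algebraMap_eq_zero_iff] at hy
    exact hu.ne_zero hy
  · exact isUnit_of_dvd_one ((dvd_algebraMap_iff hq hpow hy hu).1 (by simpa using hunit.dvd))
  · obtain ⟨a, ha⟩ := hpow s
    obtain ⟨b, hb⟩ := hpow t
    have hab : algebraMap A S (a * b) = (s * t) ^ q := by rw [map_mul, ha, hb, mul_pow]
    rw [dvd_iff_of_pow_eq_algebraMap hq hpow hy ha, dvd_iff_of_pow_eq_algebraMap hq hpow hy hb]
    exact hu.dvd_or_dvd ((dvd_iff_of_pow_eq_algebraMap hq hpow hy hab).1 hst)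

theorem isHausdorff_of_pow_eq_algebraMap (hq : q ≠ 0)
    (hpow : ∀ s : S, ∃ a, algebraMap A S a = s ^ q) [IsHausdorff (Ideal.span {u}) A] :
    IsHausdorff (Ideal.span {u}) S := by
  refine ⟨fun s hs ↦ ?_⟩
  obtain ⟨a, ha⟩ := hpow s
  suffices a = 0 by rw [this, map_zero] at ha; exact (pow_eq_zero_iff hq).1 ha.symm
  refine eq_zero_of_forall_pow_dvd (u := u) fun n ↦ ?_
  have hsn := hs n
  rw [SModEq.zero, Ideal.span_singleton_pow, Submodule.ideal_span_singleton_smul,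
    Submodule.mem_smul_pointwise_iff_exists] at hsn
  obtain ⟨t, -, rfl⟩ := hsn
  obtain ⟨b, hb⟩ := hpow t
  have hab : a = (u ^ n) ^ q * b := FaithfulSMul.algebraMap_injective A S <| by
    rw [ha, map_mul, hb, Algebra.smul_def, mul_pow, map_pow _ (u ^ n)]
  exact hab ▸ (dvd_pow_self _ hq).mul_right b

end PowMemRange

end Japanese

section Tate

universe u

theorem exists_algebraMap_eq_pow_integralClosure {A : Type*} [CommRing A] [IsIntegrallyClosed A]
    (K : Type*) {L : Type*} [Field K] [Field L] [Algebra A K] [IsFractionRing A K]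
    [Algebra A L] [Algebra K L] [IsScalarTower A K L] {q : ℕ}
    (hpow : ∀ z : L, z ^ q ∈ (algebraMap K L).range) (s : integralClosure A L) :
    ∃ a, algebraMap A (integralClosure A L) a = s ^ q := by
  obtain ⟨c, hc⟩ := hpow s
  have hcint : IsIntegral A c := by
    rw [← isIntegral_algebraMap_iff (algebraMap K L).injective, hc]
    exact s.2.pow q
  obtain ⟨a, rfl⟩ := IsIntegrallyClosed.isIntegral_iff.1 hcint
  exact ⟨a, Subtype.ext <| (IsScalarTower.algebraMap_apply A K L a).trans hc⟩

variable {A : Type u} [CommRing A] [IsDomain A]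

theorem rank_quotient_le_rank {S : Type*} [CommRing S] [Algebra A S] [Module.IsTorsionFree A S]
    {x : A} (hx : x ≠ 0) [IsHausdorff (Ideal.span {x}) A] (P : Ideal S)
    [P.LiesOver (Ideal.span {x})] :
    Module.rank (A ⧸ Ideal.span {x}) (S ⧸ P) ≤ Module.rank A S := by
  refine Module.rank_def (A ⧸ Ideal.span {x}) (S ⧸ P) ▸ ciSup_le' fun s ↦ ?_
  refine LinearIndependent.cardinal_le_rank (v := fun i : s.1 ↦ Quotient.out i.1)
    (linearIndependent_of_linearIndependent_mk hx P ?_)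
  simpa using s.2.linearIndependent

theorem IsJapanese.finite_quotient {x : A} (hx : Prime x) [IsHausdorff (Ideal.span {x}) A]
    (hJ : IsJapanese (A ⧸ Ideal.span {x})) {S : Type u} [CommRing S] [Algebra A S]
    [Module.IsTorsionFree A S] [Algebra.IsIntegral A S] [IsNoetherianRing (A ⧸ Ideal.span {x})]
    (hrank : Module.rank A S < Cardinal.aleph0) (P : Ideal S) [P.IsPrime]
    [P.LiesOver (Ideal.span {x})] : Module.Finite A (S ⧸ P) := by
  let k := A ⧸ Ideal.span {x}
  let κ := FractionRing (S ⧸ P)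
  have : (Ideal.span {x}).IsPrime := (Ideal.span_singleton_prime hx.ne_zero).2 hx
  let : Algebra (FractionRing k) κ := FractionRing.liftAlgebra k κ
  have : Module.Finite (FractionRing k) κ := by
    rw [← Module.rank_lt_aleph0_iff, Algebra.IsAlgebraic.rank_of_isFractionRing k _ (S ⧸ P)]
    exact (rank_quotient_le_rank hx.ne_zero P).trans_lt hrank
  have := hJ (FractionRing k) κ
  let f : S ⧸ P →ₐ[k] integralClosure k κ :=
    (IsScalarTower.toAlgHom k (S ⧸ P) κ).codRestrict (integralClosure k κ) fun s ↦
      (Algebra.IsIntegral.isIntegral (R := k) s).algebraMap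
  have : Module.Finite k (S ⧸ P) := Module.Finite.of_injective f.toLinearMap fun _ _ h ↦
    IsFractionRing.injective (S ⧸ P) κ (congrArg Subtype.val h)
  exact Module.Finite.trans k _

theorem IsJapanese.finite_integralClosure_of_root [IsNoetherianRing A] [IsIntegrallyClosed A]
    {x : A} (hx : Prime x) [IsAdicComplete (Ideal.span {x}) A]
    (hJ : IsJapanese (A ⧸ Ideal.span {x})) (K : Type u) {L : Type u} [Field K] [Field L]
    [Algebra A K] [IsFractionRing A K] [Algebra A L] [Algebra K L] [IsScalarTower A K L]
    [FiniteDimensional K L] {q : ℕ} (hq : q ≠ 0) (hpow : ∀ z : L, z ^ q ∈ (algebraMap K L).range)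
    {y : L} (hy : y ^ q = algebraMap A L x) : Module.Finite A (integralClosure A L) := by
  let S := integralClosure A L
  have hpowS := exists_algebraMap_eq_pow_integralClosure (A := A) K hpow
  have : IsIntegrallyClosed S := integralClosure.isIntegrallyClosedOfFiniteExtension K
  have : IsFractionRing S L := integralClosure.isFractionRing_of_finite_extension K L
  have : FaithfulSMul A L := (faithfulSMul_iff_algebraMap_injective A L).2 <| by
    rw [IsScalarTower.algebraMap_eq A K L]
    exact (algebraMap K L).injective.comp (IsFractionRing.injective A K)
  let r : S := ⟨y, IsIntegral.of_pow (Nat.pos_of_ne_zero hq) (hy ▸ isIntegral_algebraMap)⟩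
  have hr : algebraMap A S x = r ^ q := Subtype.ext hy.symm
  have : (Ideal.span {r}).IsPrime :=
    (Ideal.span_singleton_prime (prime_of_pow_eq_algebraMap hq hpowS hr hx).ne_zero).2
      (prime_of_pow_eq_algebraMap hq hpowS hr hx)
  have : (Ideal.span {r}).LiesOver (Ideal.span {x}) := ⟨Ideal.ext fun a ↦ by
    rw [Ideal.under_def, Ideal.mem_comap, Ideal.mem_span_singleton, Ideal.mem_span_singleton,
      dvd_algebraMap_iff hq hpowS hr hx]⟩
  have hrank : Module.rank A S < Cardinal.aleph0 := by
    rw [← Algebra.IsAlgebraic.rank_of_isFractionRing A K S L]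
    exact Module.rank_lt_aleph0 K L
  have := hJ.finite_quotient hx hrank (Ideal.span {r})
  have : Module.Finite A (S ⧸ (Ideal.span {x} • ⊤ : Submodule A S)) := by
    have : Module.Finite A (S ⧸ Ideal.span {r ^ q}) :=
      finite_quotient_of_le_radical (I := Ideal.span {r}) ⟨{r}, by simp⟩
        (Ideal.span_singleton_le_span_singleton.mpr (dvd_pow_self r hq))
        ((Ideal.span_singleton_le_iff_mem _).mpr ⟨q, Ideal.mem_span_singleton_self _⟩)
    rw [Ideal.smul_top_eq_map, Ideal.map_span, Set.image_singleton, hr]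
    exact Module.Finite.equiv (Submodule.Quotient.restrictScalarsEquiv A _).symm
  have : IsHausdorff (Ideal.span {x}) S := isHausdorff_of_pow_eq_algebraMap hq hpowS
  exact module_finite_of_isPrecomplete (Ideal.span {x}) S

theorem pow_mem_range_of_mem_adjoin_root {K E Ω : Type*} [Field K] [Field E] [Field Ω] [Algebra K E]
    [Algebra E Ω] [Algebra K Ω] [IsScalarTower K E Ω] {p e : ℕ} [ExpChar K p]
    (hE : ∀ z : E, z ^ p ^ e ∈ (algebraMap K E).range) {y : Ω}
    (hy : y ^ p ^ e ∈ (algebraMap K Ω).range) {z : Ω} (hz : z ∈ IntermediateField.adjoin E {y}) :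
    z ^ p ^ e ∈ (algebraMap K Ω).range := by
  have : ExpChar Ω p := expChar_of_injective_algebraMap (algebraMap K Ω).injective p
  suffices (IntermediateField.adjoin E {y}).toSubfield ≤
      (algebraMap K Ω).fieldRange.comap (iterateFrobenius Ω p e) from this hz
  refine Subfield.closure_le.2 (Set.union_subset ?_ (Set.singleton_subset_iff.2 hy))
  rintro _ ⟨w, rfl⟩
  obtain ⟨c, hc⟩ := hE w
  refine ⟨c, ?_⟩
  rw [iterateFrobenius_def, ← map_pow, ← hc, ← IsScalarTower.algebraMap_apply]

theorem IsJapanese.finite_integralClosure_of_isPurelyInseparable [IsNoetherianRing A]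
    [IsIntegrallyClosed A] {x : A} (hx : Prime x) [IsAdicComplete (Ideal.span {x}) A]
    (hJ : IsJapanese (A ⧸ Ideal.span {x})) (K E : Type u) [Field K] [Field E]
    [Algebra A K] [IsFractionRing A K] [Algebra A E] [Algebra K E] [IsScalarTower A K E]
    [FiniteDimensional K E] [IsPurelyInseparable K E] : Module.Finite A (integralClosure A E) := by
  let p := ringExpChar K
  let e := IsPurelyInseparable.exponent K E
  have hq : p ^ e ≠ 0 := pow_ne_zero _ (expChar_pos K p).ne'
  obtain ⟨y, hy⟩ := IsAlgClosed.exists_pow_nat_eq (algebraMap A (AlgebraicClosure E) x)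
    (Nat.pos_of_ne_zero hq)
  have : FiniteDimensional E (IntermediateField.adjoin E {y}) :=
    IntermediateField.adjoin.finiteDimensional (Algebra.IsIntegral.isIntegral y)
  have : FiniteDimensional K (IntermediateField.adjoin E {y}) := Module.Finite.trans E _
  have : IsScalarTower A K (IntermediateField.adjoin E {y}) := IsScalarTower.to₁₂₄ A K E _
  have hyK : y ^ p ^ e ∈ (algebraMap K (AlgebraicClosure E)).range :=
    ⟨algebraMap A K x, by rw [hy, ← IsScalarTower.algebraMap_apply]⟩
  have := hJ.finite_integralClosure_of_root hx K (q := p ^ e) hq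
    (L := IntermediateField.adjoin E {y}) (fun z ↦ ?_)
    (y := ⟨y, IntermediateField.mem_adjoin_simple_self E y⟩) (Subtype.ext hy)
  · exact finite_integralClosure_of_injective
      ((IsScalarTower.toAlgHom K E (IntermediateField.adjoin E {y})).restrictScalars A)
      (algebraMap E (IntermediateField.adjoin E {y})).injective
  · obtain ⟨c, hc⟩ := pow_mem_range_of_mem_adjoin_root
      (IsPurelyInseparable.exponent_def K) hyK z.2
    exact ⟨c, Subtype.ext hc⟩

theorem IsJapanese.of_isJapanese_quotient [IsNoetherianRing A] [IsIntegrallyClosed A] {x : A}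
    (hx : Prime x) [IsAdicComplete (Ideal.span {x}) A] (hJ : IsJapanese (A ⧸ Ideal.span {x})) :
    IsJapanese A := fun K L _ _ _ _ _ _ _ _ ↦
  finite_integralClosure_of_forall_isPurelyInseparable (K := K)
    (fun E _ _ _ _ _ _ ↦ hJ.finite_integralClosure_of_isPurelyInseparable hx K E) L

end Tate

section PowerSeriesJapanese

universe u

theorem IsJapanese.of_ringEquiv {A B : Type u} [CommRing A] [CommRing B] (e : A ≃+* B)
    (hA : IsJapanese A) : IsJapanese B := by
  intro K L _ _ _ _ _ _ _ _
  let : Algebra A B := e.toRingHom.toAlgebra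
  let : Algebra A K := ((algebraMap B K).comp e.toRingHom).toAlgebra
  let : Algebra A L := ((algebraMap B L).comp e.toRingHom).toAlgebra
  have : IsScalarTower A B L := IsScalarTower.of_algebraMap_eq fun _ ↦ rfl
  have : IsScalarTower A K L := IsScalarTower.of_algebraMap_eq fun a ↦
    IsScalarTower.algebraMap_apply B K L (e a)
  have : IsFractionRing A K :=
    (IsFractionRing.isFractionRing_iff_of_base_ringEquiv (S := K) e.symm).1 ‹_›
  have : Algebra.IsIntegral A B := ⟨RingHom.isIntegral_of_surjective _ e.surjective⟩
  have := hA K L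
  let f : integralClosure A L →ₗ[A] integralClosure B L :=
    { toFun := fun x ↦ ⟨x, x.2.tower_top⟩
      map_add' := fun _ _ ↦ rfl
      map_smul' := fun _ _ ↦ rfl }
  have : Module.Finite A (integralClosure B L) := Module.Finite.of_surjective f fun x ↦
    ⟨⟨x, isIntegral_trans (x : L) x.2⟩, rfl⟩
  exact Module.Finite.of_restrictScalars_finite A B _

/-- The quotient of a power series ring by the variable is the coefficient ring. -/
def powerSeriesQuotientSpanXEquiv (A : Type*) [CommRing A] :
    (PowerSeries A ⧸ Ideal.span {(PowerSeries.X : PowerSeries A)}) ≃+* A :=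
  (Ideal.quotEquivOfEq (Ideal.ext fun f ↦ by
    rw [Ideal.mem_span_singleton, PowerSeries.X_dvd_iff, RingHom.mem_ker])).trans
    (RingHom.quotientKerEquivOfSurjective (PowerSeries.constantCoeff_surj (R := A)))

theorem isJapanese_powerSeries {A : Type u} [CommRing A] [IsDomain A] [IsNoetherianRing A]
    [IsIntegrallyClosed A] (hA : IsJapanese A) : IsJapanese (PowerSeries A) :=
  IsJapanese.of_isJapanese_quotient PowerSeries.X_prime
    (hA.of_ringEquiv (powerSeriesQuotientSpanXEquiv A).symm)

end PowerSeriesJapanese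

open MvPolynomial in
theorem subsingleton_h1Cotangent_iff_mem_sq (R S : Type*) [CommRing R] [CommRing S] [Algebra R S] :
    Subsingleton (Algebra.H1Cotangent R S) ↔ ∀ f : MvPolynomial S R, aeval id f = 0 →
      (∀ i, aeval id (pderiv i f) = (0 : S)) →
      f ∈ RingHom.ker (aeval (R := R) (id : S → S)) ^ 2 := by
  let P := Algebra.Generators.self R S
  have hcomplex (f : P.toExtension.ker) :
      P.toExtension.cotangentComplex (.mk f) = 0 ↔ ∀ i, aeval id (pderiv i f.1) = (0 : S) := by
    rw [Algebra.Extension.cotangentComplex_mk, ← P.cotangentSpaceBasis.repr.map_eq_zero_iff,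
      Finsupp.ext_iff]
    exact forall_congr' fun i ↦ by rw [P.cotangentSpaceBasis_repr_one_tmul]; rfl
  refine P.toExtension.subsingleton_h1Cotangent.trans ?_
  rw [injective_iff_map_eq_zero]
  constructor
  · intro h f hf hderiv
    have hmk := h (.mk ⟨f, hf⟩) ((hcomplex _).mpr hderiv)
    exact (Algebra.Extension.Cotangent.mk_eq_zero_iff _).mp hmk
  · intro h z hz
    obtain ⟨f, rfl⟩ := Algebra.Extension.Cotangent.mk_surjective z
    exact (Algebra.Extension.Cotangent.mk_eq_zero_iff _).mpr (h f.1 f.2 ((hcomplex f).mp hz))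

open MvPolynomial in
theorem formallySmooth_of_perfectField (K L : Type*) [Field K] [PerfectField K] [Field L]
    [Algebra K L] : Algebra.FormallySmooth K L := by
  refine ⟨inferInstance, (subsingleton_h1Cotangent_iff_mem_sq K L).mpr fun f hf hderiv ↦ ?_⟩
  obtain ⟨E, _, hvars⟩ : ∃ E : IntermediateField K L,
      Algebra.EssFiniteType K E ∧ (f.vars : Set L) ⊆ E :=
    ⟨.adjoin K f.vars, IntermediateField.essFiniteType_iff.mpr ⟨f.vars, rfl⟩,
      IntermediateField.subset_adjoin K _⟩
  have haeval (g : MvPolynomial E K) :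
      aeval id (rename E.val g) = algebraMap E L (aeval id g) := by
    rw [aeval_rename, ← aeval_algebraMap_apply]; rfl
  obtain ⟨g, rfl⟩ : ∃ g : MvPolynomial E K, rename E.val g = f :=
    exists_rename_eq_of_vars_subset_range f E.val E.val.injective fun i hi ↦
      ⟨⟨i, hvars hi⟩, rfl⟩
  have hgsq := (subsingleton_h1Cotangent_iff_mem_sq K E).mp inferInstance g
    ((algebraMap E L).injective (by rw [← haeval, hf, map_zero])) fun i ↦
    (algebraMap E L).injective (by
      rw [← haeval, ← pderiv_rename (f := E.val) E.val.injective, hderiv, map_zero])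
  have hle : (RingHom.ker (aeval (R := K) (id : E → E))).map (rename (R := K) E.val) ≤
      RingHom.ker (aeval (R := K) (id : L → L)) :=
    Ideal.map_le_iff_le_comap.mpr fun h hh ↦ by
      rw [Ideal.mem_comap, RingHom.mem_ker, haeval, RingHom.mem_ker.mp hh, map_zero]
  exact Ideal.pow_right_mono hle 2 (Ideal.map_pow (rename (R := K) E.val) _ 2 ▸
    Ideal.mem_map_of_mem _ hgsq)

section FlatDeformation

open TensorProduct

variable {R C : Type*} [CommRing R] [CommRing C] [Algebra R C] [Module.Flat R C]

theorem formallySmooth_quotient_tensor_of_sq_le {I J : Ideal R} (hIJ : I ≤ J) (hsq : J ^ 2 ≤ I)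
    [Algebra.FormallySmooth (R ⧸ J) ((R ⧸ J) ⊗[R] C)] :
    Algebra.FormallySmooth (R ⧸ I) ((R ⧸ I) ⊗[R] C) := by
  let π := Ideal.Quotient.factorₐ R hIJ
  have hπ : Function.Surjective π := Ideal.Quotient.factor_surjective hIJ
  let πC := Algebra.TensorProduct.map π (AlgHom.id R C)
  let : Algebra (R ⧸ I) (R ⧸ J) := π.toAlgebra
  let : Algebra ((R ⧸ I) ⊗[R] C) ((R ⧸ J) ⊗[R] C) := πC.toAlgebra
  have : IsScalarTower R (R ⧸ I) (R ⧸ J) := .of_algebraMap_eq' π.comp_algebraMap.symm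
  have : IsScalarTower (R ⧸ I) ((R ⧸ I) ⊗[R] C) ((R ⧸ J) ⊗[R] C) :=
    .of_algebraMap_eq fun x ↦ by
      change _ = πC (x ⊗ₜ 1)
      rw [Algebra.TensorProduct.map_tmul, map_one]; rfl
  have hker : RingHom.ker π = J.map (Ideal.Quotient.mk I) := Ideal.Quotient.factor_ker hIJ
  refine .of_surjective_of_ker_eq_map_of_flat (R' := R ⧸ J) (S' := (R ⧸ J) ⊗[R] C) hπ
    (LinearMap.rTensor_surjective C hπ) (Algebra.TensorProduct.rTensor_ker π hπ) ?_ inferInstance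
  change RingHom.ker π ^ 2 = ⊥
  rw [hker, ← Ideal.map_pow, Ideal.map_eq_bot_iff_le_ker, Ideal.mk_ker]
  exact hsq

theorem formallySmooth_quotient_pow_tensor (J : Ideal R)
    [Algebra.FormallySmooth (R ⧸ J) ((R ⧸ J) ⊗[R] C)] {n : ℕ} (hn : n ≠ 0) :
    Algebra.FormallySmooth (R ⧸ J ^ n) ((R ⧸ J ^ n) ⊗[R] C) := by
  induction n, Nat.one_le_iff_ne_zero.mpr hn using Nat.le_induction with
  | base => rwa [pow_one]
  | succ n hn ih =>
    have := ih (by omega)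
    exact formallySmooth_quotient_tensor_of_sq_le (Ideal.pow_le_pow_right n.le_succ)
      (by rw [← pow_mul]; exact Ideal.pow_le_pow_right (by omega))

theorem exists_algHom_lift_of_formallySmooth_quotient_tensor {J : Ideal R}
    [Algebra.FormallySmooth (R ⧸ J) ((R ⧸ J) ⊗[R] C)] {B B' : Type*} [CommRing B] [Algebra R B]
    [CommRing B'] [Algebra R B'] {n : ℕ} (hn : n ≠ 0) (hJ : (J ^ n).map (algebraMap R B) = ⊥)
    (π : B →ₐ[R] B') (hπ : Function.Surjective π) (hker : IsNilpotent (RingHom.ker π))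
    (f : C →ₐ[R] B') : ∃ g : C →ₐ[R] B, π.comp g = f := by
  have := formallySmooth_quotient_pow_tensor (C := C) J hn
  let β : R ⧸ J ^ n →ₐ[R] B := Ideal.Quotient.liftₐ _ (Algebra.ofId R B) fun x hx ↦ by
    have := Ideal.mem_map_of_mem (algebraMap R B) hx
    rwa [hJ] at this
  let : Algebra (R ⧸ J ^ n) B := β.toAlgebra
  let : Algebra (R ⧸ J ^ n) B' := (π.comp β).toAlgebra
  have : IsScalarTower R (R ⧸ J ^ n) B := .of_algebraMap_eq' β.comp_algebraMap.symm
  have : IsScalarTower R (R ⧸ J ^ n) B' := .of_algebraMap_eq' (π.comp β).comp_algebraMap.symm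
  let π' : B →ₐ[R ⧸ J ^ n] B' := { π with commutes' := fun _ ↦ rfl }
  let f' := Algebra.TensorProduct.lift (Algebra.ofId (R ⧸ J ^ n) B') f fun _ _ ↦ .all _ _
  let g := Algebra.FormallySmooth.liftOfSurjective f' π' hπ hker
  refine ⟨(g.restrictScalars R).comp Algebra.TensorProduct.includeRight, AlgHom.ext fun c ↦ ?_⟩
  calc π (g (1 ⊗ₜ c)) = f' (1 ⊗ₜ c) := Algebra.FormallySmooth.liftOfSurjective_apply f' π' hπ hker _
    _ = f c := by rw [Algebra.TensorProduct.lift_tmul, map_one, one_mul]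

theorem exists_algHom_lift_quotient_pow {J : Ideal R}
    [Algebra.FormallySmooth (R ⧸ J) ((R ⧸ J) ⊗[R] C)] {D : Type*} [CommRing D] [Algebra R D]
    {I : Ideal D} (hJI : J.map (algebraMap R D) ≤ I) {m n : ℕ} (hm : m ≠ 0) (hmn : m ≤ n)
    (f : C →ₐ[R] D ⧸ I ^ m) : ∃ g : C →ₐ[R] D ⧸ I ^ n,
      (Ideal.Quotient.factorₐ R (Ideal.pow_le_pow_right hmn)).comp g = f := by
  have hle : I ^ n ≤ I ^ m := Ideal.pow_le_pow_right hmn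
  have hJ : (J ^ n).map (algebraMap R (D ⧸ I ^ n)) = ⊥ := by
    rw [IsScalarTower.algebraMap_eq R D, ← Ideal.map_map, Ideal.map_pow,
      Ideal.map_eq_bot_iff_le_ker, Ideal.Quotient.algebraMap_eq, Ideal.mk_ker]
    exact Ideal.pow_right_mono hJI _
  have hker : IsNilpotent (RingHom.ker (Ideal.Quotient.factorₐ R hle)) := by
    refine ⟨n, ?_⟩
    change RingHom.ker (Ideal.Quotient.factor hle) ^ n = ⊥
    rw [Ideal.Quotient.factor_ker, ← Ideal.map_pow, Ideal.map_eq_bot_iff_le_ker, Ideal.mk_ker,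
      ← pow_mul]
    exact Ideal.pow_le_pow_right (Nat.le_mul_of_pos_left n (Nat.pos_of_ne_zero hm))
  exact exists_algHom_lift_of_formallySmooth_quotient_tensor (by omega) hJ _
    (Ideal.Quotient.factor_surjective hle) hker f

theorem exists_ringHom_lift_of_isAdicComplete {J : Ideal R}
    [Algebra.FormallySmooth (R ⧸ J) ((R ⧸ J) ⊗[R] C)] {D : Type*} [CommRing D] [Algebra R D]
    {I : Ideal D} [IsAdicComplete I D] (hJI : J.map (algebraMap R D) ≤ I) (f : C →ₐ[R] D ⧸ I) :
    ∃ g : C →+* D, (Ideal.Quotient.mk I).comp g = f := by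
  choose next hnext using fun (n : ℕ) (h : C →ₐ[R] D ⧸ I ^ (n + 1)) ↦
    exists_algHom_lift_quotient_pow hJI n.succ_ne_zero (n + 1).le_succ h
  let f₁ : C →ₐ[R] D ⧸ I ^ 1 := (Ideal.quotientEquivAlgOfEq R (pow_one I).symm).toAlgHom.comp f
  obtain ⟨lifts, hzero, hsucc⟩ : ∃ lifts : (n : ℕ) → C →ₐ[R] D ⧸ I ^ (n + 1), lifts 0 = f₁ ∧
      ∀ n, (Ideal.Quotient.factorₐ R (Ideal.pow_le_pow_right (n + 1).le_succ)).comp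
        (lifts (n + 1)) = lifts n :=
    ⟨fun n ↦ n.rec f₁ next, rfl, fun n ↦ hnext n _⟩
  let F (n : ℕ) : C →+* D ⧸ I ^ (n + 1) := (lifts n).toRingHom
  have hF {n : ℕ} : (Ideal.Quotient.factorPow I (n + 1).le_succ).comp (F (n + 1)) = F n :=
    RingHom.ext fun c ↦ DFunLike.congr_fun (hsucc n) c
  have ha : StrictMono fun n : ℕ ↦ n + 1 := strictMono_id.add_const 1
  let g := IsAdicComplete.StrictMono.liftRingHom I ha F hF
  refine ⟨g, RingHom.ext fun c ↦ ?_⟩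
  have hg : Ideal.Quotient.mk (I ^ (0 + 1)) (g c) = F 0 c :=
    IsAdicComplete.StrictMono.mk_liftRingHom I ha F hF c
  refine (Ideal.quotientEquivAlgOfEq R (pow_one I).symm).injective ?_
  exact hg.trans (DFunLike.congr_fun hzero c)

end FlatDeformation

section CohenRing

universe u

open Polynomial

section UnramifiedSubrings

variable {V : Type*} [CommRing V] [IsLocalRing V]

/-- The subrings `C` of the local ring `V` that satisfy `C ∩ 𝔪_V = pC` and whose image
in the residue field of `V` lies in the subfield `k`; the `p`-adic completion of a maximal such
subring is a Cohen ring of `k`. -/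
def unramifiedSubrings (p : ℕ) (k : Subfield (ResidueField V)) : Set (Subring V) :=
  {C | (∀ c ∈ C, c ∈ maximalIdeal V → ∃ e ∈ C, c = p * e) ∧ ∀ c ∈ C, residue V c ∈ k}

variable {p : ℕ} {k : Subfield (ResidueField V)}

theorem bot_mem_unramifiedSubrings [CharP (ResidueField V) p] : ⊥ ∈ unramifiedSubrings p k := by
  constructor
  · rintro c hc hcm
    obtain ⟨n, rfl⟩ := Subring.mem_bot.mp hc
    rw [← residue_eq_zero_iff, map_intCast, CharP.intCast_eq_zero_iff _ p] at hcm
    obtain ⟨m, rfl⟩ := hcm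
    exact ⟨m, intCast_mem _ m, by push_cast; rfl⟩
  · rintro c hc
    obtain ⟨n, rfl⟩ := Subring.mem_bot.mp hc
    rw [map_intCast]
    exact intCast_mem k n

theorem exists_maximal_unramifiedSubrings [CharP (ResidueField V) p] :
    ∃ C, Maximal (· ∈ unramifiedSubrings p k) C := by
  refine (zorn_le_nonempty₀ (unramifiedSubrings p k) (fun c hc hchain C₀ hC₀ ↦ ?_) ⊥
    bot_mem_unramifiedSubrings).imp fun _ ↦ And.right
  have hmem {x : V} : x ∈ sSup c ↔ ∃ C ∈ c, x ∈ C :=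
    Subring.mem_sSup_of_directedOn ⟨C₀, hC₀⟩ hchain.directedOn
  refine ⟨sSup c, ⟨fun x hx hxm ↦ ?_, fun x hx ↦ ?_⟩, fun C hC ↦ le_sSup hC⟩
  · obtain ⟨C, hCc, hxC⟩ := hmem.mp hx
    obtain ⟨e, he, rfl⟩ := (hc hCc).1 x hxC hxm
    exact ⟨e, hmem.mpr ⟨C, hCc, he⟩, rfl⟩
  · obtain ⟨C, hCc, hxC⟩ := hmem.mp hx
    exact (hc hCc).2 x hxC

variable {C : Subring V}

theorem mem_of_maximal_unramifiedSubrings (hC : Maximal (· ∈ unramifiedSubrings p k) C) {a : V}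
    (ha : residue V a ∈ k) (hadjoin : ∀ f : C[X], aeval a f ∈ maximalIdeal V →
      ∃ g : C[X], aeval a g = aeval a f ∧ ∀ i, (g.coeff i : V) ∈ maximalIdeal V) : a ∈ C := by
  let C' : Subring V := (aeval (R := C) a).toRingHom.range
  have hle : C ≤ C' := fun c hc ↦ ⟨Polynomial.C ⟨c, hc⟩, aeval_C _ _⟩
  suffices hC' : C' ∈ unramifiedSubrings p k from hC.le_of_ge hC' hle ⟨X, aeval_X _⟩
  constructor
  · rintro _ ⟨f, rfl⟩ hf
    obtain ⟨g, hgf, hg⟩ := hadjoin f hf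
    have hdvd : Polynomial.C (p : C) ∣ g := C_dvd_iff_dvd_coeff _ _ |>.mpr fun i ↦ by
      obtain ⟨e, he, hpe⟩ := hC.1.1 _ (g.coeff i).2 (hg i)
      exact ⟨⟨e, he⟩, Subtype.ext (by simpa using hpe)⟩
    obtain ⟨h, rfl⟩ := hdvd
    exact ⟨aeval a h, ⟨h, rfl⟩, by simpa using hgf.symm⟩
  · rintro _ ⟨f, rfl⟩
    change residue V (aeval a f) ∈ k
    rw [aeval_eq_sum_range, map_sum]
    refine sum_mem fun i _ ↦ ?_
    rw [Algebra.smul_def, map_mul, map_pow]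
    exact mul_mem (hC.1.2 _ (f.coeff i).2) (pow_mem ha i)

theorem inv_mem_of_maximal_unramifiedSubrings (hC : Maximal (· ∈ unramifiedSubrings p k) C)
    (u : Vˣ) (hu : (u : V) ∈ C) : (↑u⁻¹ : V) ∈ C := by
  refine mem_of_maximal_unramifiedSubrings hC ?_ fun f hf ↦ ?_
  · rw [map_units_inv]
    exact inv_mem (hC.1.2 u hu)
  · let c : C := aeval ⟨u, hu⟩ f.reverse
    have hc : (c : V) * ↑u⁻¹ ^ f.natDegree = aeval (↑u⁻¹ : V) f := by
      have := eval₂_reverse_mul_pow (algebraMap C V) (↑u⁻¹ : V) f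
      rw [invOf_units, inv_inv] at this
      exact congr_arg (· * _) (aeval_algebraMap_apply V (⟨u, hu⟩ : C) f.reverse).symm |>.trans this
    refine ⟨monomial f.natDegree c, by rw [aeval_monomial]; exact hc, fun i ↦ ?_⟩
    rw [coeff_monomial]
    split_ifs
    · rwa [← hc, Ideal.mul_unit_mem_iff_mem _ (u⁻¹.isUnit.pow _)] at hf
    · exact zero_mem _

theorem isLocalHom_of_maximal_unramifiedSubrings
    (hC : Maximal (· ∈ unramifiedSubrings p k) C) : IsLocalHom (algebraMap C V) where
  map_nonunit c hc := by
    obtain ⟨u, hu⟩ := hc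
    refine IsUnit.of_mul_eq_one ⟨_, inv_mem_of_maximal_unramifiedSubrings hC u (hu ▸ c.2)⟩ ?_
    exact Subtype.ext ((congr_arg (· * _) hu.symm).trans u.mul_inv)

theorem maximalIdeal_eq_span_of_maximal_unramifiedSubrings [IsLocalRing C]
    [CharP (ResidueField V) p] (hC : Maximal (· ∈ unramifiedSubrings p k) C) :
    maximalIdeal C = Ideal.span {(p : C)} := by
  have := isLocalHom_of_maximal_unramifiedSubrings hC
  have hmem (c : C) : c ∈ maximalIdeal C ↔ (c : V) ∈ maximalIdeal V :=
    (map_mem_nonunits_iff (algebraMap C V) c).symm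
  refine le_antisymm (fun c hc ↦ ?_) ?_
  · obtain ⟨e, he, hce⟩ := hC.1.1 c c.2 ((hmem c).mp hc)
    exact Ideal.mem_span_singleton.mpr ⟨⟨e, he⟩, Subtype.ext hce⟩
  · rw [Ideal.span_singleton_le_iff_mem, hmem, ← residue_eq_zero_iff]
    simp

theorem exists_lift_forall_exists_coeff_mem [IsLocalRing C] [IsLocalHom (algebraMap C V)]
    (hroot : ∀ F : V[X], F.Monic → ∀ α : ResidueField V, aeval α F = 0 →
      ∃ a, F.eval a = 0 ∧ residue V a = α) (α : ResidueField V) :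
    ∃ a, residue V a = α ∧ ∀ f : C[X], aeval a f ∈ maximalIdeal V →
      ∃ g : C[X], aeval a g = aeval a f ∧ ∀ i, (g.coeff i : V) ∈ maximalIdeal V := by
  have hcoeff {g : C[X]} (hg : g.map (residue C) = 0) (i : ℕ) :
      (g.coeff i : V) ∈ maximalIdeal V := by
    have hgi : g.coeff i ∈ maximalIdeal C := by
      rw [← residue_eq_zero_iff, ← coeff_map, hg, coeff_zero]
    exact (map_mem_nonunits_iff (algebraMap C V) _).mpr hgi
  have haeval (a : V) (g : C[X]) :
      aeval (residue V a) (g.map (residue C)) = residue V (aeval a g) := by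
    rw [aeval_def, eval₂_map, aeval_def, hom_eval₂]
    rfl
  by_cases hα : IsIntegral (ResidueField C) α
  · obtain ⟨F, hFmin, -, hF⟩ := lifts_and_natDegree_eq_and_monic
      (map_surjective _ residue_surjective (minpoly (ResidueField C) α)) (minpoly.monic hα)
    have hFα : aeval α (F.map (algebraMap C V)) = 0 := by
      obtain ⟨b, rfl⟩ := residue_surjective α
      rw [← minpoly.aeval (ResidueField C) (residue V b), ← hFmin, haeval, aeval_map_algebraMap]
      exact aeval_algebraMap_apply (ResidueField V) b F
    obtain ⟨a, ha, rfl⟩ := hroot (F.map (algebraMap C V)) (hF.map _) α hFα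
    rw [eval_map_algebraMap] at ha
    refine ⟨a, rfl, fun f hf ↦ ⟨f %ₘ F, aeval_modByMonic_eq_self_of_root ha, hcoeff ?_⟩⟩
    rw [map_modByMonic _ hF, hFmin, modByMonic_eq_zero_iff_dvd (minpoly.monic hα)]
    exact minpoly.dvd _ _ (by rw [haeval, (residue_eq_zero_iff _).mpr hf])
  · obtain ⟨a, rfl⟩ := residue_surjective α
    refine ⟨a, rfl, fun f hf ↦ ⟨f, rfl, hcoeff ?_⟩⟩
    refine (transcendental_iff.mp fun h ↦ hα h.isIntegral) _ ?_
    rw [haeval, (residue_eq_zero_iff _).mpr hf]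

theorem isLocalRing_of_maximal_unramifiedSubrings
    (hC : Maximal (· ∈ unramifiedSubrings p k) C) : IsLocalRing C :=
  have := isLocalHom_of_maximal_unramifiedSubrings hC
  (algebraMap C V).domain_isLocalRing

theorem exists_residue_eq_of_maximal_unramifiedSubrings
    (hC : Maximal (· ∈ unramifiedSubrings p k) C)
    (hroot : ∀ F : V[X], F.Monic → ∀ α : ResidueField V, aeval α F = 0 →
      ∃ a, F.eval a = 0 ∧ residue V a = α) {α : ResidueField V} (hα : α ∈ k) :
    ∃ c : C, residue V c = α := by
  have := isLocalHom_of_maximal_unramifiedSubrings hC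
  have := isLocalRing_of_maximal_unramifiedSubrings hC
  obtain ⟨a, rfl, ha⟩ := exists_lift_forall_exists_coeff_mem (C := C) hroot α
  exact ⟨⟨a, mem_of_maximal_unramifiedSubrings hC hα ha⟩, rfl⟩

end UnramifiedSubrings

theorem exists_eval_eq_zero_residue_eq_of_isAlgClosed {V : Type*} (Ω : Type*) [CommRing V]
    [IsDomain V] [IsLocalRing V] [IsIntegrallyClosed V] [Field Ω] [IsAlgClosed Ω] [Algebra V Ω]
    [IsFractionRing V Ω] {F : V[X]} (hF : F.Monic) {α : ResidueField V} (hα : aeval α F = 0) :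
    ∃ a, F.eval a = 0 ∧ residue V a = α := by
  have hsplits : F.Splits := by
    refine Splits.of_splits_map_of_injective (IsFractionRing.injective V Ω)
      (IsAlgClosed.splits (F.map (algebraMap V Ω))) fun x hx ↦ ?_
    rw [mem_roots_map_of_injective (IsFractionRing.injective V Ω) hF.ne_zero] at hx
    exact IsIntegrallyClosed.isIntegral_iff.mp ⟨F, hF, hx⟩
  obtain ⟨m, hm⟩ := splits_iff_exists_multiset.mp hsplits
  rw [hF.leadingCoeff, map_one, one_mul] at hm
  have hprod : (m.map fun a ↦ α - residue V a).prod = 0 := by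
    rw [← hα, hm, map_multiset_prod, Multiset.map_map]
    simp [← ResidueField.algebraMap_eq]
  obtain ⟨a, ham, ha⟩ := Multiset.mem_map.mp (Multiset.prod_eq_zero_iff.mp hprod)
  refine ⟨a, ?_, (sub_eq_zero.mp ha).symm⟩
  rw [hm]
  exact dvd_iff_isRoot.mp (Multiset.dvd_prod (Multiset.mem_map_of_mem _ ham))

theorem exists_valuationSubring_residueField_hom (k : Type u) [Field k] :
    ∃ (Ω : Type u) (_ : Field Ω) (_ : CharZero Ω) (_ : IsAlgClosed Ω) (V : ValuationSubring Ω),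
      Nonempty (k →+* ResidueField V) := by
  let P := MvPolynomial k ℤ
  let φ : P →+* k := MvPolynomial.eval₂Hom (Int.castRingHom k) id
  have hφ : Function.Surjective φ := fun x ↦ ⟨MvPolynomial.X x, MvPolynomial.eval₂Hom_X' _ _ _⟩
  let q := RingHom.ker φ
  have : q.IsPrime := RingHom.ker_isPrime φ
  let Ω := AlgebraicClosure (FractionRing P)
  let ι : P →+* Ω := (algebraMap (FractionRing P) Ω).comp (algebraMap P (FractionRing P))
  have hι : Function.Injective ι :=
    (algebraMap (FractionRing P) Ω).injective.comp (IsFractionRing.injective P (FractionRing P))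
  let ιq : Localization.AtPrime q →+* Ω := IsLocalization.lift (M := q.primeCompl) (g := ι)
    fun y ↦ ((map_ne_zero_iff ι hι).mpr (ne_of_mem_of_not_mem (zero_mem q) y.2).symm).isUnit
  obtain ⟨V, hV, _⟩ := IsLocalRing.exists_factor_valuationRing ιq
  have hker : q ≤ RingHom.ker ((residue _).comp (algebraMap P (Localization.AtPrime q))) :=
    fun x hx ↦ (residue_eq_zero_iff _).mpr
      ((IsLocalization.AtPrime.to_map_mem_maximal_iff _ q x).mpr hx)
  have : CharZero P := charZero_of_injective_algebraMap (MvPolynomial.C_injective k ℤ)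
  let ιV : Localization.AtPrime q →+* V := ιq.codRestrict V.toSubring hV
  have : IsLocalHom ιV := ‹_›
  exact ⟨Ω, inferInstance, charZero_of_injective_ringHom hι, inferInstance, V,
    ⟨(ResidueField.map ιV).comp (φ.liftOfSurjective hφ ⟨_, hker⟩)⟩⟩

theorem isDiscreteValuationRing_of_maximalIdeal_eq_span {A : Type*} [CommRing A] [IsLocalRing A]
    [IsHausdorff (maximalIdeal A) A] {ϖ : A} (hϖ : ϖ ∈ nonZeroDivisors A)
    (hmax : maximalIdeal A = Ideal.span {ϖ}) :
    ∃ _ : IsDomain A, IsDiscreteValuationRing A := by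
  have hfact {x : A} (hx : x ≠ 0) : ∃ n, Associated (ϖ ^ n) x := by
    have hfin : FiniteMultiplicity ϖ x := by
      by_contra hinf
      refine hx (IsHausdorff.haus ‹_› x fun n ↦ ?_)
      rw [SModEq.zero, smul_eq_mul, Ideal.mul_top, hmax, Ideal.span_singleton_pow,
        Ideal.mem_span_singleton]
      exact FiniteMultiplicity.not_iff_forall.mp hinf n
    obtain ⟨u, hu, hϖu⟩ := hfin.exists_eq_pow_mul_and_not_dvd
    rw [← Ideal.mem_span_singleton, ← hmax, mem_maximalIdeal, mem_nonunits_iff, not_not] at hϖu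
    exact ⟨_, hϖu.unit, hu.symm⟩
  have : NoZeroDivisors A := by
    refine noZeroDivisors_iff_forall_mem_nonZeroDivisors.mpr fun x hx ↦ ?_
    obtain ⟨n, u, rfl⟩ := hfact hx
    exact mul_mem (pow_mem hϖ n) u.isUnit.mem_nonZeroDivisors
  have : IsDomain A := NoZeroDivisors.to_isDomain A
  have hprime : Prime ϖ := (Ideal.span_singleton_prime (nonZeroDivisors.ne_zero hϖ)).mp
    (hmax ▸ (maximalIdeal.isMaximal A).isPrime)
  exact ⟨this, .ofHasUnitMulPowIrreducibleFactorization ⟨ϖ, hprime.irreducible, hfact⟩⟩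

theorem algebraMap_mem_nonZeroDivisors_adicCompletion {A : Type*} [CommRing A] {a : A}
    (ha : a ∈ nonZeroDivisors A) : algebraMap A (AdicCompletion (Ideal.span {a}) A) a ∈
      nonZeroDivisors (AdicCompletion (Ideal.span {a}) A) := by
  refine mem_nonZeroDivisors_iff_right.mpr fun x hx ↦ AdicCompletion.ext_evalₐ fun n ↦ ?_
  induction x using AdicCompletion.induction_on with | _ x
  have hdvd : a ^ (n + 1) ∣ x (n + 1) * a := by
    have := congr_arg (AdicCompletion.evalₐ (Ideal.span {a}) (n + 1)) hx
    rwa [map_mul, AlgHom.commutes, AdicCompletion.evalₐ_mk, Ideal.Quotient.algebraMap_eq,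
      ← map_mul, map_zero, Ideal.Quotient.eq_zero_iff_mem, Ideal.span_singleton_pow,
      Ideal.mem_span_singleton] at this
  have hxn : AdicCompletion.evalₐ (Ideal.span {a}) n (AdicCompletion.mk _ A x) =
      Ideal.Quotient.mk _ (x (n + 1)) :=
    (AdicCompletion.evalₐ_mk _ n x).trans (AdicCompletion.Ideal.mk_eq_mk _ n.le_succ x).symm
  rw [hxn, map_zero, Ideal.Quotient.eq_zero_iff_mem, Ideal.span_singleton_pow,
    Ideal.mem_span_singleton]
  obtain ⟨b, hb⟩ := hdvd
  exact ⟨b, (mul_cancel_right_mem_nonZeroDivisors ha).mp (by rw [hb]; ring)⟩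

theorem exists_isLocalRing_maximalIdeal_eq_span (k : Type u) [Field k] (p : ℕ) [CharP k p] :
    ∃ (C : Type u) (_ : CommRing C) (_ : IsDomain C) (_ : CharZero C) (_ : IsLocalRing C),
      maximalIdeal C = Ideal.span {(p : C)} ∧ Nonempty (ResidueField C ≃+* k) := by
  obtain ⟨Ω, _, _, _, V, ⟨ι⟩⟩ := exists_valuationSubring_residueField_hom k
  have : CharP (ResidueField V) p := charP_of_injective_ringHom ι.injective p
  obtain ⟨C, hC⟩ := exists_maximal_unramifiedSubrings (p := p) (k := ι.fieldRange)
  have := isLocalHom_of_maximal_unramifiedSubrings hC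
  have := isLocalRing_of_maximal_unramifiedSubrings hC
  refine ⟨C, inferInstance, inferInstance, ?_, this,
    maximalIdeal_eq_span_of_maximal_unramifiedSubrings hC, ⟨?_⟩⟩
  · exact ((algebraMap V Ω).comp (algebraMap C V)).charZero
  have hrange : (ResidueField.map (algebraMap C V)).fieldRange = ι.fieldRange := by
    refine le_antisymm ?_ fun α hα ↦ ?_
    · rintro _ ⟨α, rfl⟩
      obtain ⟨c, rfl⟩ := residue_surjective α
      exact hC.1.2 c c.2
    · obtain ⟨c, rfl⟩ := exists_residue_eq_of_maximal_unramifiedSubrings hC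
        (fun F hF α ↦ exists_eval_eq_zero_residue_eq_of_isAlgClosed Ω hF) hα
      exact ⟨residue C c, rfl⟩
  exact (RingHom.rangeRestrictFieldEquiv _).trans
    ((RingEquiv.subfieldCongr hrange).trans ι.rangeRestrictFieldEquiv.symm)

theorem exists_cohenRing (k : Type u) [Field k] (p : ℕ) [CharP k p] [NeZero p] :
    ∃ (C : Type u) (_ : CommRing C) (_ : IsDomain C) (_ : IsDiscreteValuationRing C),
      maximalIdeal C = Ideal.span {(p : C)} ∧ IsAdicComplete (maximalIdeal C) C ∧
        Nonempty (ResidueField C ≃+* k) := by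
  obtain ⟨C, _, _, _, _, hmax, ⟨e⟩⟩ := exists_isLocalRing_maximalIdeal_eq_span k p
  have hfg : (maximalIdeal C).FG := hmax ▸ ⟨{(p : C)}, by simp⟩
  let Ĉ := AdicCompletion (maximalIdeal C) C
  have : IsLocalRing Ĉ := AdicCompletion.isLocalRing_of_fg hfg
  have : IsLocalHom (algebraMap C Ĉ) := AdicCompletion.algebraMap_isLocalHom_of_fg hfg
  have : IsAdicComplete (maximalIdeal Ĉ) Ĉ := AdicCompletion.isAdicComplete_of_fg hfg
  have hmax' : maximalIdeal Ĉ = Ideal.span {(p : Ĉ)} := by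
    rw [AdicCompletion.maximalIdeal_eq_map_of_fg hfg,
      congr_arg (Ideal.map (algebraMap C Ĉ)) hmax, Ideal.map_span, Set.image_singleton, map_natCast]
  have hp : (p : Ĉ) ∈ nonZeroDivisors Ĉ := by
    have := algebraMap_mem_nonZeroDivisors_adicCompletion
      (mem_nonZeroDivisors_of_ne_zero (NeZero.ne (p : C)))
    rw [← hmax] at this
    simpa only [map_natCast] using this
  obtain ⟨_, _⟩ := isDiscreteValuationRing_of_maximalIdeal_eq_span hp hmax'
  exact ⟨Ĉ, inferInstance, ‹_›, ‹_›, hmax', ‹_›, ⟨(RingEquiv.ofBijective _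
    (AdicCompletion.residueField_map_bijective_of_fg hfg)).symm.trans e⟩⟩

end CohenRing

section CoefficientRing

open TensorProduct

universe u

theorem formallySmooth_quotient_tensor_of_isMaximal_map {R C : Type*} [CommRing R] [CommRing C]
    [Algebra R C] {J : Ideal R} [J.IsMaximal] [Finite (R ⧸ J)]
    (hJC : (J.map (algebraMap R C)).IsMaximal) :
    Algebra.FormallySmooth (R ⧸ J) ((R ⧸ J) ⊗[R] C) := by
  let _ : Field (R ⧸ J) := Ideal.Quotient.field J
  let _ : Field (C ⧸ J.map (algebraMap R C)) := Ideal.Quotient.field _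
  have := formallySmooth_of_perfectField (R ⧸ J) (C ⧸ J.map (algebraMap R C))
  exact .of_equiv (Algebra.TensorProduct.quotIdealMapEquivQuotTensor C J)

variable (D : Type u) [CommRing D] [IsLocalRing D] [IsAdicComplete (maximalIdeal D) D]

theorem exists_coefficientField_of_perfectField (F : Type*) [Field F] [PerfectField F]
    [Algebra F D] : ∃ φ : ResidueField D →+* D, (residue D).comp φ = RingHom.id _ := by
  have := formallySmooth_of_perfectField F (ResidueField D)
  obtain ⟨φ, hφ⟩ := Algebra.FormallySmooth.exists_mkₐ_comp_eq_of_isAdicComplete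
    (I := maximalIdeal D) (AlgHom.id F (ResidueField D))
  exact ⟨φ, congrArg AlgHom.toRingHom hφ⟩

theorem exists_ringHom_residue_comp_eq {C : Type*} [CommRing C] [IsDomain C] [IsLocalRing C]
    [CharZero C] {p : ℕ} [Fact p.Prime] (hC : maximalIdeal C = Ideal.span {(p : C)})
    (hpD : (p : D) ∈ maximalIdeal D) (f : C →+* ResidueField D) :
    ∃ φ : C →+* D, (residue D).comp φ = f := by
  let J : Ideal ℤ := Ideal.span {(p : ℤ)}
  have hJ : J.IsMaximal := Int.ideal_span_isMaximal_of_prime p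
  have hJC : J.map (algebraMap ℤ C) = maximalIdeal C := by simp [J, Ideal.map_span, hC]
  have := formallySmooth_quotient_tensor_of_isMaximal_map (hJC ▸ maximalIdeal.isMaximal C)
  refine exists_ringHom_lift_of_isAdicComplete (R := ℤ) (J := J) (I := maximalIdeal D) ?_
    f.toIntAlgHom
  simpa [J, Ideal.map_span, Ideal.span_le] using hpD

theorem charZero_of_natCast_prime_ne_zero {C : Type*} [CommRing C] [IsDomain C] {p : ℕ}
    (hp : p.Prime) (hpC : ¬IsUnit (p : C)) (hp0 : (p : C) ≠ 0) : CharZero C := by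
  obtain ⟨q, _⟩ := CharP.exists C
  rcases CharP.char_is_prime_or_zero C q with hq | rfl
  · have hqp : q ≠ p := fun h ↦ hp0 (h ▸ CharP.cast_eq_zero C q)
    have hcop := ((Nat.coprime_primes hq hp).mpr hqp).cast (R := C)
    rw [CharP.cast_eq_zero, isCoprime_zero_left] at hcop
    exact absurd hcop hpC
  · exact CharP.charP_to_charZero C

theorem isJapanese_of_isDiscreteValuationRing (C : Type u) [CommRing C] [IsDomain C]
    [IsDiscreteValuationRing C] [IsAdicComplete (maximalIdeal C) C] : IsJapanese C := by
  obtain ⟨ϖ, hϖ⟩ := IsDiscreteValuationRing.exists_irreducible C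
  rw [hϖ.maximalIdeal_eq] at *
  have := PrincipalIdealRing.isMaximal_of_irreducible hϖ
  let _ := Ideal.Quotient.field (Ideal.span {ϖ})
  exact IsJapanese.of_isJapanese_quotient hϖ.prime (isJapanese_of_field _)

theorem exists_coefficientField_of_forall_prime (h : ∀ p : ℕ, p.Prime →
    (p : D) ∈ maximalIdeal D → (p : D) = 0) :
    ∃ φ : ResidueField D →+* D, (residue D).comp φ = RingHom.id _ := by
  obtain ⟨p, _⟩ := CharP.exists (ResidueField D)
  rcases CharP.char_is_prime_or_zero (ResidueField D) p with hp | rfl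
  · have : Fact p.Prime := ⟨hp⟩
    have hpD : (p : D) = 0 := h p hp <| by
      rw [← residue_eq_zero_iff, map_natCast, CharP.cast_eq_zero]
    have : CharP D p := (CharP.charP_iff_prime_eq_zero hp).mpr hpD
    let _ := ZMod.algebra D p
    exact exists_coefficientField_of_perfectField D (ZMod p)
  · have : CharZero (D ⧸ maximalIdeal D) := CharP.charP_to_charZero (ResidueField D)
    obtain ⟨_⟩ := EqualCharZero.nonempty_algebraRat_iff (R := D) |>.mpr fun I hI ↦
      (Ideal.Quotient.factor (le_maximalIdeal hI)).charZero
    exact exists_coefficientField_of_perfectField D ℚ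

theorem exists_coefficientRing [IsDomain D] [IsNoetherianRing D] :
    ∃ (A : Type u) (_ : CommRing A) (_ : IsDomain A) (_ : IsNoetherianRing A)
      (_ : IsIntegrallyClosed A) (a : A) (φ : A →+* D),
      IsJapanese A ∧ IsPrecomplete (Ideal.span {a}) A ∧ φ a ∈ maximalIdeal D ∧
      Function.Surjective ((residue D).comp φ) ∧
      ringKrullDim A + ringKrullDim (D ⧸ Ideal.span {φ a}) ≤ ringKrullDim D := by
  by_cases! h : ∀ p : ℕ, p.Prime → (p : D) ∈ maximalIdeal D → (p : D) = 0
  · obtain ⟨φ, hφ⟩ := exists_coefficientField_of_forall_prime D h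
    refine ⟨ResidueField D, _, inferInstance, inferInstance, inferInstance, 0, φ,
      isJapanese_of_field _, ?_, by simp, hφ ▸ Function.surjective_id, ?_⟩
    · rw [Ideal.span_singleton_zero]
      infer_instance
    · rw [ringKrullDim_eq_zero_of_field, zero_add]
      exact ringKrullDim_quotient_le _
  · obtain ⟨p, hp, hpD, hp0⟩ := h
    have : Fact p.Prime := ⟨hp⟩
    have : CharP (ResidueField D) p := (CharP.charP_iff_prime_eq_zero hp).mpr <| by
      rw [← map_natCast (residue D), residue_eq_zero_iff]
      exact hpD
    obtain ⟨C, _, _, _, hC, _, ⟨e⟩⟩ := exists_cohenRing (ResidueField D) p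
    have hpC : Irreducible (p : C) := (IsDiscreteValuationRing.irreducible_iff_uniformizer _).mpr hC
    have := charZero_of_natCast_prime_ne_zero hp hpC.not_isUnit hpC.ne_zero
    obtain ⟨φ, hφ⟩ := exists_ringHom_residue_comp_eq D hC hpD (e.toRingHom.comp (residue C))
    refine ⟨C, _, inferInstance, inferInstance, inferInstance, p, φ,
      isJapanese_of_isDiscreteValuationRing C, ?_, ?_,
      hφ ▸ e.surjective.comp residue_surjective, ?_⟩
    · exact hC ▸ (inferInstance : IsPrecomplete (maximalIdeal C) C)
    · rwa [map_natCast]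
    · rw [map_natCast, IsDiscreteValuationRing.ringKrullDim_eq_one, add_comm]
      exact ringKrullDim_quotient_succ_le_of_nonZeroDivisor (mem_nonZeroDivisors_of_ne_zero hp0)

end CoefficientRing

section CohenStructure

universe u

section Finiteness

variable {A D : Type*} [CommRing A] [CommRing D] [Algebra A D]

theorem finite_quotient_of_finite_quotient_sup_map (I : Ideal A) [IsPrecomplete I A]
    (J : Ideal D) [IsHausdorff I (D ⧸ J)] [Module.Finite A (D ⧸ J ⊔ I.map (algebraMap A D))] :
    Module.Finite A (D ⧸ J) := by
  have hsmul : (I • ⊤ : Submodule A (D ⧸ J)) =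
      ((I.map (algebraMap A D)).map (Ideal.Quotient.mkₐ A J)).restrictScalars A := by
    rw [Ideal.smul_top_eq_map, IsScalarTower.algebraMap_eq A D (D ⧸ J), ← Ideal.map_map]
    rfl
  have : Module.Finite A ((D ⧸ J) ⧸ (I • ⊤ : Submodule A (D ⧸ J))) :=
    .equiv ((Submodule.quotEquivOfEq _ _ hsmul).trans
      ((Submodule.Quotient.restrictScalarsEquiv A _).trans
        (DoubleQuot.quotQuotEquivQuotSupₐ A J _).toLinearEquiv)).symm
  exact module_finite_of_isPrecomplete I (D ⧸ J)

theorem exists_algebra_powerSeries_finite_quotient {I : Ideal D} [IsAdicComplete I D] {y : D}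
    (hy : y ∈ I) (J : Ideal D) [IsHausdorff I (D ⧸ J)]
    [Module.Finite A (D ⧸ J ⊔ Ideal.span {y})] :
    ∃ _ : Algebra (PowerSeries A) D, Module.Finite (PowerSeries A) (D ⧸ J) := by
  obtain ⟨ψ, hψC, hψX⟩ := exists_powerSeries_ringHom (algebraMap A D) I hy
  let _ : Algebra (PowerSeries A) D := ψ.toAlgebra
  have : IsScalarTower A (PowerSeries A) D := .of_algebraMap_eq fun a ↦ by rw [← hψC]; rfl
  have hX : (Ideal.span {PowerSeries.X}).map (algebraMap (PowerSeries A) D) = Ideal.span {y} := by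
    rw [Ideal.map_span, Set.image_singleton]
    exact congrArg (fun d ↦ Ideal.span {d}) hψX
  have : IsHausdorff (Ideal.span {(PowerSeries.X : PowerSeries A)}) (D ⧸ J) :=
    .of_map (J := I) (hX ▸ (Ideal.span_singleton_le_iff_mem I).mpr hy)
  have : Module.Finite (PowerSeries A)
      (D ⧸ J ⊔ (Ideal.span {PowerSeries.X}).map (algebraMap (PowerSeries A) D)) :=
    hX ▸ .of_restrictScalars_finite A _ _
  exact ⟨_, finite_quotient_of_finite_quotient_sup_map (Ideal.span {PowerSeries.X}) J⟩

theorem algebraMap_injective_of_ringKrullDim_le [IsDomain A] [IsDomain D] [Module.Finite A D]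
    [FiniteRingKrullDim D] (h : ringKrullDim A ≤ ringKrullDim D) :
    Function.Injective (algebraMap A D) := by
  rw [injective_iff_map_eq_zero]
  by_contra! ⟨a, ha, ha0⟩
  let S := (Algebra.ofId A D).range
  have hSA : ringKrullDim S + 1 ≤ ringKrullDim A :=
    ringKrullDim_succ_le_of_surjective _ (Algebra.ofId A D).rangeRestrict_surjective
      (mem_nonZeroDivisors_of_ne_zero ha0) (Subtype.ext ha)
  have : Algebra.IsIntegral S D := .tower_top A
  have hDS : ringKrullDim D ≤ ringKrullDim S :=
    Order.krullDim_le_of_strictMono (PrimeSpectrum.comap (algebraMap S D)) fun P Q hPQ ↦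
      Ideal.IsIntegral.comap_lt_comap (R := S) (I := P.asIdeal) (J := Q.asIdeal) hPQ
  have hlt : ringKrullDim D + 1 ≤ ringKrullDim D := by grw [hDS, hSA, h]
  rw [show ringKrullDim D = (_ : ℕ) from Order.krullDim_eq_length_of_finiteDimensionalOrder] at hlt
  exact (ENat.WithBot.add_one_le_natCast_iff.mp hlt).false

theorem ringKrullDim_powerSeries_le (A : Type*) [CommRing A] [IsNoetherianRing A] :
    ringKrullDim (PowerSeries A) ≤ ringKrullDim A + 1 := by
  have hX : PowerSeries.X ∈ Ring.jacobson (PowerSeries A) :=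
    Ideal.jacobson_bot (R := PowerSeries A) ▸ IsAdicComplete.le_jacobson_bot
      (Ideal.span {(PowerSeries.X : PowerSeries A)}) (Ideal.mem_span_singleton_self _)
  have h := ringKrullDim_le_ringKrullDim_quotient_add_card {(PowerSeries.X : PowerSeries A)}
    (by simpa using hX)
  rw [Finset.coe_singleton, Finset.card_singleton, Nat.cast_one,
    ringKrullDim_eq_of_ringEquiv (powerSeriesQuotientSpanXEquiv A)] at h
  exact h

end Finiteness

theorem IsJapanese.finite_integralClosure_fractionRing {A D : Type u} [CommRing A] [IsDomain A]
    [CommRing D] [IsDomain D] [Algebra A D] [Module.Finite A D] [FaithfulSMul A D]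
    (hA : IsJapanese A) : Module.Finite D (integralClosure D (FractionRing D)) := by
  let K := FractionRing D
  let _ : Algebra (FractionRing A) K := FractionRing.liftAlgebra A K
  have : IsScalarTower A (FractionRing A) K := FractionRing.isScalarTower_liftAlgebra A K
  have : FiniteDimensional (FractionRing A) K := .of_isLocalization A D (nonZeroDivisors A)
  have := hA (FractionRing A) K
  let f : integralClosure A K →ₗ[A] integralClosure D K :=
    { toFun := fun x ↦ ⟨x, x.2.tower_top⟩
      map_add' := fun _ _ ↦ rfl
      map_smul' := fun _ _ ↦ rfl }
  have : Module.Finite A (integralClosure D K) :=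
    .of_surjective f fun x ↦ ⟨⟨x, isIntegral_trans (x : K) x.2⟩, rfl⟩
  exact .of_restrictScalars_finite A D _

section LocalRing

variable {D : Type u} [CommRing D] [IsLocalRing D] [IsNoetherianRing D]

theorem exists_finset_maximalIdeal_le_radical_sup {I : Ideal D} (hI : I ≠ ⊤) :
    ∃ s : Finset D, (s : Set D) ⊆ maximalIdeal D ∧ s.card ≤ ringKrullDim (D ⧸ I) ∧
      maximalIdeal D ≤ (Ideal.span s ⊔ I).radical := by
  classical
  have : Nontrivial (D ⧸ I) := Ideal.Quotient.nontrivial_iff.mpr hI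
  have : IsLocalRing (D ⧸ I) := .of_surjective' _ Ideal.Quotient.mk_surjective
  have : IsLocalHom (Ideal.Quotient.mk I) := .of_surjective _ Ideal.Quotient.mk_surjective
  have hcomap : (maximalIdeal (D ⧸ I)).comap (Ideal.Quotient.mk I) = maximalIdeal D :=
    maximalIdeal_comap _
  obtain ⟨t, ht, hcard⟩ :=
    Ideal.exists_finset_card_eq_height_of_isNoetherianRing (maximalIdeal (D ⧸ I))
  have hsurj : Set.SurjOn (Ideal.Quotient.mk I) (maximalIdeal D) t := by
    intro x hx
    obtain ⟨d, rfl⟩ := Ideal.Quotient.mk_surjective x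
    exact ⟨d, hcomap.le (ht.1.2 (Ideal.subset_span hx)), rfl⟩
  obtain ⟨s, hs, hinj, rfl⟩ := t.exists_subset_injOn_image_eq_of_surjOn _ hsurj
  refine ⟨s, hs, ?_, ?_⟩
  · rw [← maximalIdeal_height_eq_ringKrullDim, ← hcard, Finset.card_image_of_injOn hinj]
    rfl
  · have hrad : maximalIdeal (D ⧸ I) ≤ ((Ideal.span s).map (Ideal.Quotient.mk I)).radical := by
      rw [Ideal.map_span, ← Finset.coe_image, Ideal.radical_eq_sInf]
      exact le_sInf fun P hP ↦ ht.2 ⟨hP.2, hP.1⟩ (le_maximalIdeal hP.2.ne_top)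
    have h := Ideal.comap_mono (f := Ideal.Quotient.mk I) hrad
    rwa [hcomap, Ideal.comap_radical, Ideal.comap_map_of_surjective _ Ideal.Quotient.mk_surjective,
      ← RingHom.ker_eq_comap_bot, Ideal.mk_ker] at h

theorem IsJapanese.exists_finite_of_finite_quotient [IsAdicComplete (maximalIdeal D) D]
    (s : Finset D) (hs : (s : Set D) ⊆ maximalIdeal D) (A : Type u) [CommRing A] [IsDomain A]
    [IsNoetherianRing A] [IsIntegrallyClosed A] [Algebra A D] (hA : IsJapanese A)
    [Module.Finite A (D ⧸ Ideal.span (s : Set D))] :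
    ∃ (B : Type u) (_ : CommRing B) (_ : IsDomain B) (_ : Algebra B D),
      IsJapanese B ∧ Module.Finite B D ∧ ringKrullDim B ≤ ringKrullDim A + s.card := by
  classical
  induction s using Finset.induction generalizing A with
  | empty =>
    refine ⟨A, _, inferInstance, inferInstance, hA, ?_, by simp⟩
    have hspan : Ideal.span ((∅ : Finset D) : Set D) = ⊥ := by simp
    exact .equiv ((Ideal.quotientEquivAlgOfEq A hspan).trans
      (AlgEquiv.quotientBot A D)).toLinearEquiv
  | insert y s hy ih =>
    rw [Finset.coe_insert, Set.insert_subset_iff] at hs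
    have hspan : Ideal.span ((insert y s : Finset D) : Set D) =
        Ideal.span (s : Set D) ⊔ Ideal.span {y} := by
      rw [Finset.coe_insert, Ideal.span_insert, sup_comm]
    have : Module.Finite A (D ⧸ Ideal.span (s : Set D) ⊔ Ideal.span {y}) := hspan ▸ ‹_›
    obtain ⟨_, _⟩ :=
      exists_algebra_powerSeries_finite_quotient (A := A) hs.1 (Ideal.span (s : Set D))
    obtain ⟨B, iB, iBdom, iBD, hB, hfin, hdim⟩ :=
      ih hs.2 (PowerSeries A) (isJapanese_powerSeries hA)
    refine ⟨B, iB, iBdom, iBD, hB, hfin, hdim.trans ?_⟩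
    grw [ringKrullDim_powerSeries_le A, Finset.card_insert_of_notMem hy, add_assoc, Nat.cast_add,
      Nat.cast_one, add_comm (1 : WithBot ℕ∞)]

end LocalRing

theorem finite_integralClosure_fractionRing_of_isAdicComplete (D : Type u) [CommRing D]
    [IsDomain D] [IsLocalRing D] [IsNoetherianRing D] [IsAdicComplete (maximalIdeal D) D] :
    Module.Finite D (integralClosure D (FractionRing D)) := by
  obtain ⟨A, _, _, _, _, a, φ, hA, _, ha, hsurj, hdim⟩ := exists_coefficientRing D
  let _ : Algebra A D := φ.toAlgebra
  let I : Ideal A := Ideal.span {a}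
  have hI : I.map (algebraMap A D) = Ideal.span {φ a} := by
    rw [Ideal.map_span, Set.image_singleton]; rfl
  have hItop : I.map (algebraMap A D) ≠ ⊤ := hI ▸ Ideal.span_singleton_ne_top ha
  obtain ⟨s, hs, hcard, hrad⟩ := exists_finset_maximalIdeal_le_radical_sup hItop
  have : Module.Finite A (D ⧸ maximalIdeal D) :=
    .of_surjective (Algebra.linearMap A (D ⧸ maximalIdeal D)) hsurj
  have : Module.Finite A (D ⧸ Ideal.span (s : Set D) ⊔ I.map (algebraMap A D)) :=
    finite_quotient_of_le_radical (IsNoetherian.noetherian (maximalIdeal D))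
      (sup_le (Ideal.span_le.mpr hs) (le_maximalIdeal hItop)) hrad
  have : IsHausdorff I (D ⧸ Ideal.span (s : Set D)) :=
    IsHausdorff.map_algebraMap_iff.mp (.of_isLocalRing _ _ hItop)
  have := finite_quotient_of_finite_quotient_sup_map I (Ideal.span (s : Set D))
  obtain ⟨B, _, _, _, hB, _, hBdim⟩ := hA.exists_finite_of_finite_quotient s hs A
  have hinj : Function.Injective (algebraMap B D) := algebraMap_injective_of_ringKrullDim_le <| by
    grw [hBdim, hcard, hI, hdim]
  have : FaithfulSMul B D := (faithfulSMul_iff_algebraMap_injective B D).mpr hinj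
  exact hB.finite_integralClosure_fractionRing

end CohenStructure

section NoetherianCompletion

theorem isHausdorff_of_injective {R : Type*} [CommRing R] {I : Ideal R} {M N : Type*}
    [AddCommGroup M] [Module R M] [AddCommGroup N] [Module R N] [IsHausdorff I N] (f : M →ₗ[R] N)
    (hf : Function.Injective f) : IsHausdorff I M where
  haus' x hx := hf <| (map_zero f).symm ▸ IsHausdorff.haus ‹_› (f x) fun n ↦
    SModEq.zero.mpr <| Submodule.smul_mono le_rfl le_top <|
      Submodule.map_smul'' (I ^ n) ⊤ f ▸ Submodule.mem_map_of_mem (SModEq.zero.mp (hx n))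

theorem isPrecomplete_of_surjective {R : Type*} [CommRing R] {I : Ideal R} {M N : Type*}
    [AddCommGroup M] [Module R M] [AddCommGroup N] [Module R N] [IsPrecomplete I M] (f : M →ₗ[R] N)
    (hf : Function.Surjective f) : IsPrecomplete I N := by
  rw [← AdicCompletion.of_surjective_iff]
  intro z
  obtain ⟨w, rfl⟩ := AdicCompletion.map_surjective I hf z
  obtain ⟨m, rfl⟩ := AdicCompletion.of_surjective I M w
  exact ⟨f m, by rw [AdicCompletion.map_of]⟩

universe u

variable {R : Type u} [CommRing R] [IsNoetherianRing R] (I : Ideal R)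

theorem isHausdorff_adicCompletion_quotient_map (J : Ideal R) :
    IsHausdorff I (AdicCompletion I R ⧸ J.map (algebraMap R (AdicCompletion I R))) := by
  let e := Algebra.TensorProduct.quotIdealMapEquivTensorQuot (AdicCompletion I R) J
  let f := AdicCompletion.ofTensorProduct I (R ⧸ J) ∘ₗ e.toLinearMap
  have hf : Function.Injective f :=
    (AdicCompletion.ofTensorProduct_bijective_of_finite_of_isNoetherian I (R ⧸ J)).1.comp
      e.injective
  exact isHausdorff_of_injective (f.restrictScalars R) hf

theorem isNoetherianRing_adicCompletion_of_finite_quotient (s : Finset R)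
    (hs : (s : Set R) ⊆ I) (A : Type u) [CommRing A] [IsNoetherianRing A]
    [Algebra A (AdicCompletion I R)] [Module.Finite A (AdicCompletion I R ⧸
      (Ideal.span (s : Set R)).map (algebraMap R (AdicCompletion I R)))] :
    IsNoetherianRing (AdicCompletion I R) := by
  classical
  let D := AdicCompletion I R
  have : IsAdicComplete (I.map (algebraMap R D)) D :=
    AdicCompletion.isAdicComplete_self I (IsNoetherian.noetherian I)
  induction s using Finset.induction generalizing A with
  | empty =>
    have hbot : (Ideal.span ((∅ : Finset R) : Set R)).map (algebraMap R D) = ⊥ := by simp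
    have : Module.Finite A D := .equiv
      ((Ideal.quotientEquivAlgOfEq A hbot).trans (AlgEquiv.quotientBot A D)).toLinearEquiv
    exact .of_finite A D
  | insert y s _ ih =>
    rw [Finset.coe_insert, Set.insert_subset_iff] at hs
    let J := (Ideal.span (s : Set R)).map (algebraMap R D)
    have hspan : (Ideal.span ((insert y s : Finset R) : Set R)).map (algebraMap R D) =
        J ⊔ Ideal.span {algebraMap R D y} := by
      rw [Finset.coe_insert, Ideal.span_insert, sup_comm, Ideal.map_sup, Ideal.map_span _ {y},
        Set.image_singleton]
    have : Module.Finite A (D ⧸ J ⊔ Ideal.span {algebraMap R D y}) := hspan ▸ ‹_›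
    have : IsHausdorff (I.map (algebraMap R D)) (D ⧸ J) :=
      IsHausdorff.map_algebraMap_iff.mpr (isHausdorff_adicCompletion_quotient_map I _)
    obtain ⟨_, _⟩ := exists_algebra_powerSeries_finite_quotient (A := A)
      (Ideal.mem_map_of_mem (algebraMap R D) hs.1) J
    exact ih hs.2 (PowerSeries A)

theorem isNoetherianRing_adicCompletion : IsNoetherianRing (AdicCompletion I R) := by
  let D := AdicCompletion I R
  obtain ⟨s, hs⟩ := IsNoetherian.noetherian I
  have hker : I.map (algebraMap R D) = RingHom.ker (AdicCompletion.evalOneₐ I).toRingHom :=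
    (AdicCompletion.ker_evalOneₐ_eq_map I (IsNoetherian.noetherian I)).symm
  have : Module.Finite R (D ⧸ (Ideal.span (s : Set R)).map (algebraMap R D)) := by
    rw [show Ideal.span (s : Set R) = I from hs, hker]
    exact .equiv (Ideal.quotientKerAlgEquivOfSurjective
      (AdicCompletion.evalOneₐ_surjective I)).symm.toLinearEquiv
  exact isNoetherianRing_adicCompletion_of_finite_quotient I s (hs ▸ Submodule.subset_span) R

theorem isAdicComplete_quotient_of_isLocalRing {D : Type*} [CommRing D] [IsLocalRing D]
    [IsNoetherianRing D] [IsAdicComplete (maximalIdeal D) D] (P : Ideal D) [IsLocalRing (D ⧸ P)] :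
    IsAdicComplete (maximalIdeal (D ⧸ P)) (D ⧸ P) := by
  have hmap : (maximalIdeal D).map (algebraMap D (D ⧸ P)) = maximalIdeal (D ⧸ P) :=
    map_maximalIdeal_of_surjective (algebraMap D (D ⧸ P)) Ideal.Quotient.mk_surjective
  have := isPrecomplete_of_surjective (I := maximalIdeal D) P.mkQ P.mkQ_surjective
  rw [← hmap, IsAdicComplete.map_algebraMap_iff]
  constructor

end NoetherianCompletion

section AnalyticDescent

open scoped nonZeroDivisors TensorProduct

theorem finite_integralClosure_pi {A : Type*} [CommRing A] [IsNoetherianRing A] {ι : Type*}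
    [Finite ι] (L : ι → Type*) [∀ i, CommRing (L i)] [∀ i, Algebra A (L i)]
    [∀ i, Module.Finite A (integralClosure A (L i))] :
    Module.Finite A (integralClosure A (∀ i, L i)) :=
  Module.Finite.of_injective
    (LinearMap.pi fun i ↦ (Pi.evalAlgHom A L i).mapIntegralClosure.toLinearMap) fun _ _ h ↦
      Subtype.ext <| funext fun i ↦ congrArg Subtype.val (congrFun h i)

theorem finite_integralClosure_of_finite_integralClosure_quotient {A : Type*} [CommRing A]
    [IsNoetherianRing A] (I : Ideal A) (L : Type*) [CommRing L] [Algebra A L] [Algebra (A ⧸ I) L]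
    [IsScalarTower A (A ⧸ I) L] [Module.Finite (A ⧸ I) (integralClosure (A ⧸ I) L)] :
    Module.Finite A (integralClosure A L) := by
  have : Module.Finite A (integralClosure (A ⧸ I) L) := .trans (A ⧸ I) _
  let f : integralClosure A L →ₗ[A] integralClosure (A ⧸ I) L :=
    { toFun := fun x ↦ ⟨x, x.2.tower_top⟩, map_add' := fun _ _ ↦ rfl, map_smul' := fun _ _ ↦ rfl }
  exact .of_injective f fun _ _ h ↦
    Subtype.ext (congrArg (fun z : integralClosure (A ⧸ I) L ↦ (z : L)) h)

theorem isUnit_algebraMap_fractionRing_quotient {S : Type*} [CommRing S] {P : Ideal S} [P.IsPrime]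
    (hP : P ∈ minimalPrimes S) (y : S⁰) : IsUnit (algebraMap S (FractionRing (S ⧸ P)) y) := by
  rw [isUnit_iff_ne_zero, IsScalarTower.algebraMap_apply S (S ⧸ P), Ne,
    FaithfulSMul.algebraMap_eq_zero_iff, Ideal.Quotient.algebraMap_eq,
    Ideal.Quotient.eq_zero_iff_mem]
  exact fun hy ↦
    Set.disjoint_left.mp (Ideal.disjoint_nonZeroDivisors_of_mem_minimalPrimes hP) hy y.2

theorem exists_fractionRing_algHom_pi_injective (S : Type*) [CommRing S] [IsReduced S] :
    ∃ f : FractionRing S →ₐ[S] ∀ P : minimalPrimes S, FractionRing (S ⧸ P.1),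
      Function.Injective f := by
  have hprime (P : minimalPrimes S) : P.1.IsPrime := P.2.1.1
  let g := Algebra.ofId S (∀ P : minimalPrimes S, FractionRing (S ⧸ P.1))
  have hunit (y : S⁰) : IsUnit (g y) :=
    Pi.isUnit_iff.mpr fun P ↦ isUnit_algebraMap_fractionRing_quotient P.2 y
  have hg : Function.Injective g := by
    refine (injective_iff_map_eq_zero _).mpr fun s hs ↦ ?_
    have hmem : s ∈ nilradical S := by
      rw [nilradical, ← Ideal.sInf_minimalPrimes, Ideal.mem_sInf]
      intro P hP
      have : P.IsPrime := hP.1.1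
      have hsP : algebraMap S (FractionRing (S ⧸ P)) s = 0 := congrFun hs ⟨P, hP⟩
      rwa [IsScalarTower.algebraMap_apply S (S ⧸ P), FaithfulSMul.algebraMap_eq_zero_iff,
        Ideal.Quotient.algebraMap_eq, Ideal.Quotient.eq_zero_iff_mem] at hsP
    simpa using hmem
  refine ⟨IsLocalization.liftAlgHom hunit, ?_⟩
  refine (IsLocalization.lift_injective_iff _).mpr fun x y ↦ ?_
  rw [(IsFractionRing.injective S (FractionRing S)).eq_iff]
  exact hg.eq_iff.symm

theorem finite_integralClosure_fractionRing_of_isReduced (S : Type*) [CommRing S] [IsReduced S]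
    [IsNoetherianRing S] (h : ∀ P : Ideal S, P.IsPrime →
      Module.Finite (S ⧸ P) (integralClosure (S ⧸ P) (FractionRing (S ⧸ P)))) :
    Module.Finite S (integralClosure S (FractionRing S)) := by
  obtain ⟨f, hf⟩ := exists_fractionRing_algHom_pi_injective S
  have : Finite (minimalPrimes S) := minimalPrimes.finite_of_isNoetherianRing S
  have (P : minimalPrimes S) : Module.Finite S (integralClosure S (FractionRing (S ⧸ P.1))) := by
    have := h P P.2.1.1
    exact finite_integralClosure_of_finite_integralClosure_quotient P.1 _
  have := finite_integralClosure_pi (A := S) fun P : minimalPrimes S ↦ FractionRing (S ⧸ P.1)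
  exact finite_integralClosure_of_injective f hf

theorem exists_tensor_fractionRing_algHom_injective (R S : Type*) [CommRing R] [CommRing S]
    [Algebra R S] [Module.Flat R S] :
    ∃ f : S ⊗[R] FractionRing R →ₐ[S] FractionRing S, Function.Injective f := by
  have hle : Algebra.algebraMapSubmonoid S R⁰ ≤ S⁰ := by
    rintro _ ⟨y, hy, rfl⟩
    refine mem_nonZeroDivisors_iff_right.mpr fun z hz ↦
      Module.Flat.isSMulRegular_of_nonZeroDivisors (M := S) hy ?_
    simpa [Algebra.smul_def, mul_comm] using hz
  have hunit (y : Algebra.algebraMapSubmonoid S R⁰) :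
      IsUnit (Algebra.ofId S (FractionRing S) y) :=
    IsLocalization.map_units (FractionRing S) (⟨y, hle y.2⟩ : S⁰)
  refine ⟨IsLocalization.liftAlgHom hunit, ?_⟩
  refine (IsLocalization.lift_injective_iff _).mpr fun x y ↦ ?_
  rw [(IsLocalization.injective (S ⊗[R] FractionRing R) hle).eq_iff]
  exact (IsFractionRing.injective S (FractionRing S)).eq_iff.symm

theorem finite_integralClosure_fractionRing_of_faithfullyFlat (R S : Type*) [CommRing R]
    [CommRing S] [Algebra R S] [Module.FaithfullyFlat R S] [IsNoetherianRing S]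
    [Module.Finite S (integralClosure S (FractionRing S))] :
    Module.Finite R (integralClosure R (FractionRing R)) := by
  obtain ⟨f, hf⟩ := exists_tensor_fractionRing_algHom_injective R S
  have := finite_integralClosure_of_injective f hf
  have : Module.Finite S (S ⊗[R] integralClosure R (FractionRing R)) :=
    .of_injective (TensorProduct.toIntegralClosure R S (FractionRing R)).toLinearMap
      TensorProduct.toIntegralClosure_injective_of_flat
  exact .of_finite_tensorProduct_of_faithfullyFlat S

theorem finite_integralClosure_fractionRing_of_isReduced_adicCompletion (R : Type*) [CommRing R]
    [IsLocalRing R] [IsNoetherianRing R] [IsReduced (AdicCompletion (maximalIdeal R) R)] :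
    Module.Finite R (integralClosure R (FractionRing R)) := by
  let S := AdicCompletion (maximalIdeal R) R
  have : IsNoetherianRing S := isNoetherianRing_adicCompletion _
  have : Module.FaithfullyFlat R S := .of_flat_of_isLocalHom
  have : IsAdicComplete (maximalIdeal S) S := AdicCompletion.maximalIdeal_eq_map (R := R) ▸
    AdicCompletion.isAdicComplete_self _ (IsNoetherian.noetherian _)
  have : Module.Finite S (integralClosure S (FractionRing S)) := by
    refine finite_integralClosure_fractionRing_of_isReduced S fun P _ ↦ ?_
    have : IsLocalRing (S ⧸ P) := .of_surjective' _ Ideal.Quotient.mk_surjective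
    have := isAdicComplete_quotient_of_isLocalRing P
    exact finite_integralClosure_fractionRing_of_isAdicComplete _
  exact finite_integralClosure_fractionRing_of_faithfullyFlat R S

end AnalyticDescent

section ExtVanishing

open Abelian

universe w v u

variable {C : Type u} [Category.{v} C] [Abelian C]

theorem subsingleton_abelianExt_succ_of_subsingleton_ext_obj [HasExt.{w} C] {R : Type*} [Ring R]
    [Linear R C] [EnoughProjectives C] {X Y : C} {n : ℕ}
    (h : Subsingleton (((Ext R C (n + 1)).obj (Opposite.op X)).obj Y)) :
    Subsingleton (Abelian.Ext.{w} X Y (n + 1)) := by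
  let P := projectiveResolution X
  have hzero : Limits.IsZero ((P.complex.linearYonedaObj R Y).homology (n + 1)) :=
    (ModuleCat.isZero_of_subsingleton _).of_iso (P.isoExt (R := R) (n + 1) Y).symm
  rw [← HomologicalComplex.exactAt_iff_isZero_homology,
    HomologicalComplex.exactAt_iff' _ n (n + 1) (n + 2) (by simp) (by simp),
    ShortComplex.moduleCat_exact_iff] at hzero
  refine subsingleton_of_forall_eq 0 fun e ↦ ?_
  obtain ⟨f, hf, rfl⟩ := P.extMk_surjective e (n + 2) rfl
  exact (P.extMk_eq_zero_iff _ _ _ _ n rfl).mpr (hzero f hf)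

variable [HasExt.{w} C]

theorem subsingleton_abelianExt_succ_of_shortExact {S : ShortComplex C} (hS : S.ShortExact)
    [Projective S.X₂] {Y : C} {n : ℕ} [Subsingleton (Abelian.Ext.{w} S.X₃ Y (n + 2))] :
    Subsingleton (Abelian.Ext.{w} S.X₁ Y (n + 1)) := by
  refine subsingleton_of_forall_eq 0 fun e ↦ ?_
  obtain ⟨e', rfl⟩ :=
    Ext.contravariant_sequence_exact₁ hS Y e (n₁ := n + 2) (by lia) (Subsingleton.elim _ _)
  rw [Ext.eq_zero_of_projective e', Ext.comp_zero]

theorem exists_comp_eq_of_subsingleton_abelianExt_one {S : ShortComplex C} (hS : S.ShortExact)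
    {X : C} [Subsingleton (Abelian.Ext.{w} X S.X₁ 1)] (f : X ⟶ S.X₃) :
    ∃ g : X ⟶ S.X₂, g ≫ S.g = f := by
  obtain ⟨e, he⟩ :=
    Ext.covariant_sequence_exact₃ X hS (Ext.mk₀ f) (n₁ := 1) rfl (Subsingleton.elim _ _)
  obtain ⟨g, rfl⟩ := (Ext.mk₀_bijective X S.X₂).surjective e
  rw [Ext.mk₀_comp_mk₀] at he
  exact ⟨g, (Ext.mk₀_bijective X S.X₃).injective he⟩

end ExtVanishing

section ModuleExtVanishing

universe u

variable {R : Type u} [CommRing R] {M N Q : Type u} [AddCommGroup M] [Module R M]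
  [AddCommGroup N] [Module R N] [AddCommGroup Q] [Module R Q]

theorem subsingleton_abelianExt_ker (φ : N →ₗ[R] M) (hφ : Function.Surjective φ)
    [Module.Projective R N] {n : ℕ}
    [Subsingleton (Abelian.Ext.{u} (ModuleCat.of R M) (ModuleCat.of R Q) (n + 2))] :
    Subsingleton (Abelian.Ext.{u} (ModuleCat.of R φ.ker) (ModuleCat.of R Q) (n + 1)) := by
  have : Projective (ModuleCat.of R N) := (IsProjective.iff_projective (R := R) N).mp inferInstance
  exact subsingleton_abelianExt_succ_of_shortExact (LinearMap.shortExact_shortComplexKer hφ)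

theorem exists_linearMap_comp_eq_of_subsingleton_abelianExt_one (φ : N →ₗ[R] Q)
    (hφ : Function.Surjective φ)
    [Subsingleton (Abelian.Ext.{u} (ModuleCat.of R M) (ModuleCat.of R φ.ker) 1)]
    (f : M →ₗ[R] Q) : ∃ g : M →ₗ[R] N, φ ∘ₗ g = f := by
  obtain ⟨g, hg⟩ := exists_comp_eq_of_subsingleton_abelianExt_one
    (LinearMap.shortExact_shortComplexKer hφ) (ModuleCat.ofHom f)
  exact ⟨g.hom, congrArg ModuleCat.Hom.hom hg⟩

end ModuleExtVanishing

section LocalFreeness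

open TensorProduct

variable {A : Type*} [CommRing A] [IsLocalRing A]

section Residue

variable {M N : Type*} [AddCommGroup M] [Module A M] [AddCommGroup N] [Module A N]

theorem one_tmul_residueField_eq_zero_iff {m : M} :
    (1 : ResidueField A) ⊗ₜ[A] m = 0 ↔ m ∈ maximalIdeal A • (⊤ : Submodule A M) := by
  rw [← LinearMap.ker_tensorProductMk (Q := M) (I := maximalIdeal A)]
  rfl

theorem lTensor_residueField_injective_iff (l : M →ₗ[A] N) :
    Function.Injective (l.lTensor (ResidueField A)) ↔ ∀ m,
      l m ∈ maximalIdeal A • (⊤ : Submodule A N) → m ∈ maximalIdeal A • (⊤ : Submodule A M) := by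
  have hsurj := TensorProduct.mk_surjective A M (ResidueField A) residue_surjective
  rw [injective_iff_map_eq_zero, hsurj.forall]
  simp only [TensorProduct.mk_apply, LinearMap.lTensor_tmul, one_tmul_residueField_eq_zero_iff]

theorem free_of_forall_exists_mkQ_comp_eq [Module.Finite A M]
    (h : ∀ f : M →ₗ[A] A ⧸ maximalIdeal A, ∃ g : M →ₗ[A] A, (maximalIdeal A).mkQ ∘ₗ g = f) :
    Module.Free A M := by
  let b := Module.finBasis (ResidueField A) (ResidueField A ⊗[A] M)
  choose g hg using fun j ↦
    h ((b.coord j).restrictScalars A ∘ₗ TensorProduct.mk A (ResidueField A) M 1)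
  have hinj : Function.Injective ((LinearMap.pi g).lTensor (ResidueField A)) := by
    refine (lTensor_residueField_injective_iff _).mpr fun m hm ↦
      one_tmul_residueField_eq_zero_iff.mp (b.ext_elem fun j ↦ ?_)
    have hgj : g j m ∈ maximalIdeal A := by
      simpa using Submodule.smul_top_le_comap_smul_top _ (LinearMap.proj j) hm
    rw [map_zero]
    exact (LinearMap.congr_fun (hg j) m).symm.trans ((residue_eq_zero_iff _).mpr hgj)
  obtain ⟨l, hl⟩ := (split_injective_iff_lTensor_residueField_injective _).mpr hinj
  have : Module.Projective A M := .of_split _ _ hl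
  exact Module.free_of_flat_of_isLocalRing

end Residue

section SocleElement

variable {x s : A} {M : Type*} [AddCommGroup M] [Module A M]

theorem exists_smul_eq_smul_of_mem_maximalIdeal_smul_top
    (hsm : ∀ y ∈ maximalIdeal A, x ∣ s * y) {m : M}
    (hm : m ∈ maximalIdeal A • (⊤ : Submodule A M)) : ∃ m', s • m = x • m' := by
  induction hm using Submodule.smul_induction_on' with
  | smul y hy m _ =>
    obtain ⟨c, hc⟩ := hsm y hy
    exact ⟨c • m, by rw [smul_smul, smul_smul, hc]⟩
  | add m₁ _ m₂ _ ih₁ ih₂ =>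
    obtain ⟨m₁', h₁⟩ := ih₁
    obtain ⟨m₂', h₂⟩ := ih₂
    exact ⟨m₁' + m₂', by rw [smul_add, smul_add, h₁, h₂]⟩

theorem mem_maximalIdeal_smul_top_of_smul_eq_smul [Module.Free A M] [Module.Finite A M]
    (hs : ¬ x ∣ s) {m m' : M} (h : s • m = x • m') :
    m ∈ maximalIdeal A • (⊤ : Submodule A M) := by
  let b := Module.Free.chooseBasis A M
  rw [← b.sum_repr m]
  refine Submodule.sum_mem _ fun j _ ↦ Submodule.smul_mem_smul (fun hu ↦ hs ?_) trivial
  have hj : s * b.repr m j = x * b.repr m' j := by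
    simpa only [map_smul, Finsupp.smul_apply, smul_eq_mul] using congrArg (b.repr · j) h
  exact hu.dvd_mul_right.mp ⟨_, hj⟩

theorem dvd_of_forall_exists_smul_eq_smul [Module.Free A M] [Module.Finite A M] [Nontrivial M]
    (h : ∀ m : M, ∃ m', s • m = x • m') : x ∣ s := by
  by_contra hs
  have htop : maximalIdeal A • (⊤ : Submodule A M) = ⊤ :=
    top_le_iff.mp fun m _ ↦ (h m).elim fun _ ↦ mem_maximalIdeal_smul_top_of_smul_eq_smul hs
  exact Submodule.top_ne_ideal_smul_of_le_jacobson_annihilator (maximalIdeal_le_jacobson _)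
    htop.symm

/-- The hypotheses on `s` say that its class is a nonzero socle element of `A ⧸ (x)`. -/
theorem free_of_exact_of_socle_element (hs : ¬ x ∣ s) (hsm : ∀ y ∈ maximalIdeal A, x ∣ s * y)
    {K F : Type*} [AddCommGroup K] [Module A K] [Module.Free A K] [Module.Finite A K]
    [AddCommGroup F] [Module A F] [Module.Free A F] [Module.Finite A F]
    {i : K →ₗ[A] F} {g : F →ₗ[A] M} (hi : Function.Injective i) (hg : Function.Surjective g)
    (hex : Function.Exact i g) (hx : IsSMulRegular M x) : Module.Free A M := by
  refine Module.free_of_lTensor_residueField_injective i g hg hex ?_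
  refine (lTensor_residueField_injective_iff i).mpr fun e he ↦ ?_
  obtain ⟨f, hf⟩ := exists_smul_eq_smul_of_mem_maximalIdeal_smul_top hsm he
  have hgf : g f = 0 := hx.right_eq_zero_of_smul <| by
    rw [← map_smul, ← hf, map_smul, hex.apply_apply_eq_zero, smul_zero]
  obtain ⟨e', rfl⟩ := (hex f).mp hgf
  exact mem_maximalIdeal_smul_top_of_smul_eq_smul hs (hi (by rw [map_smul, map_smul, hf]))

end SocleElement

end LocalFreeness

section LocalizedFreeness

universe u

theorem map_localization_eq_maximalIdeal_of_mem_minimalPrimes {R : Type*} [CommRing R]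
    {I p : Ideal R} [p.IsPrime] (hI : I.IsRadical) (hp : p ∈ I.minimalPrimes) :
    I.map (algebraMap R (Localization.AtPrime p)) = maximalIdeal (Localization.AtPrime p) := by
  rw [← Localization.AtPrime.map_eq_maximalIdeal,
    ← IsLocalization.AtPrime.radical_map_of_mem_minimalPrimes _ p I hp,
    ← IsLocalization.map_radical p.primeCompl, hI.radical]

theorem exists_comp_eq_of_isLocalizedModule {R : Type*} [CommRing R] (S : Submonoid R)
    (A : Type*) [CommRing A] [Algebra R A] [IsLocalization S A] {M N Q M' N' Q' : Type*}
    [AddCommGroup M] [Module R M] [Module.FinitePresentation R M]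
    [AddCommGroup N] [Module R N] [AddCommGroup Q] [Module R Q]
    [AddCommGroup M'] [Module R M'] [Module A M'] [IsScalarTower R A M']
    [AddCommGroup N'] [Module R N'] [Module A N'] [IsScalarTower R A N']
    [AddCommGroup Q'] [Module R Q'] [Module A Q'] [IsScalarTower R A Q']
    (iM : M →ₗ[R] M') [IsLocalizedModule S iM] (iN : N →ₗ[R] N') [IsLocalizedModule S iN]
    (iQ : Q →ₗ[R] Q') [IsLocalizedModule S iQ] {φ : N →ₗ[R] Q} {φ' : N' →ₗ[A] Q'}
    (hφ : ∀ n, φ' (iN n) = iQ (φ n)) (hlift : ∀ f : M →ₗ[R] Q, ∃ g : M →ₗ[R] N, φ ∘ₗ g = f)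
    (f' : M' →ₗ[A] Q') : ∃ g' : M' →ₗ[A] N', φ' ∘ₗ g' = f' := by
  obtain ⟨⟨f, s⟩, hf⟩ := IsLocalizedModule.surj S (IsLocalizedModule.mapExtendScalars S iM iQ A) f'
  obtain ⟨g, rfl⟩ := hlift f
  refine ⟨IsLocalization.mk' A 1 s • IsLocalizedModule.mapExtendScalars S iM iN A g, ?_⟩
  have hcomp : φ' ∘ₗ IsLocalizedModule.mapExtendScalars S iM iN A g =
      IsLocalizedModule.mapExtendScalars S iM iQ A (φ ∘ₗ g) := by
    refine LinearMap.restrictScalars_injective R (IsLocalizedModule.ext S iM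
      (IsLocalizedModule.map_units iQ) (LinearMap.ext fun m ↦ ?_))
    simp [hφ]
  rw [LinearMap.comp_smul, hcomp, ← hf, Submonoid.smul_def, ← algebraMap_smul A (s : R),
    smul_smul, IsLocalization.mk'_spec, map_one, one_smul]

theorem free_localizedModule_of_forall_exists_mkQ_comp_eq {R : Type*} [CommRing R]
    {c p : Ideal R} [p.IsPrime]
    (hc : c.map (algebraMap R (Localization.AtPrime p)) = maximalIdeal (Localization.AtPrime p))
    {M : Type*} [AddCommGroup M] [Module R M] [Module.FinitePresentation R M]
    (hlift : ∀ f : M →ₗ[R] R ⧸ c, ∃ g : M →ₗ[R] R, c.mkQ ∘ₗ g = f) :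
    Module.Free (Localization.AtPrime p) (LocalizedModule p.primeCompl M) := by
  refine free_of_forall_exists_mkQ_comp_eq ?_
  rw [← hc, ← Ideal.localized'_eq_map _ p.primeCompl]
  exact exists_comp_eq_of_isLocalizedModule p.primeCompl _ (LocalizedModule.mkLinearMap _ M)
    (Algebra.linearMap R (Localization.AtPrime p)) (c.toLocalizedQuotient' _ _ _) (fun _ ↦ rfl)
    hlift

theorem free_localizedModule_of_subsingleton_abelianExt {R : Type u} [CommRing R]
    [IsNoetherianRing R] {c p : Ideal R} [p.IsPrime]
    (hc : c.map (algebraMap R (Localization.AtPrime p)) = maximalIdeal (Localization.AtPrime p))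
    {x : R} (hx : IsSMulRegular R x) {s : Localization.AtPrime p} (hs : ¬ algebraMap R _ x ∣ s)
    (hsm : ∀ y ∈ maximalIdeal (Localization.AtPrime p), algebraMap R _ x ∣ s * y) (n : ℕ)
    (M : Type u) [AddCommGroup M] [Module R M] [Module.Finite R M] (hM : IsSMulRegular M x)
    [Subsingleton (Abelian.Ext.{u} (ModuleCat.of R M) (ModuleCat.of R c) (n + 1))] :
    Module.Free (Localization.AtPrime p) (LocalizedModule p.primeCompl M) := by
  induction n generalizing M with
  | zero =>
    have := Module.finitePresentation_of_finite R M
    refine free_localizedModule_of_forall_exists_mkQ_comp_eq hc fun f ↦ ?_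
    have : Subsingleton (Abelian.Ext.{u} (ModuleCat.of R M) (ModuleCat.of R c.mkQ.ker) 1) := by
      rwa [Submodule.ker_mkQ]
    exact exists_linearMap_comp_eq_of_subsingleton_abelianExt_one c.mkQ c.mkQ_surjective f
  | succ n ih =>
    obtain ⟨k, φ, hφ⟩ := Module.Finite.exists_fin' R M
    have := subsingleton_abelianExt_ker (Q := c) (n := n) φ hφ
    have hF : IsSMulRegular (Fin k → R) x := .pi fun _ ↦ hx
    have := ih φ.ker (hF.submodule _ _)
    have : Module.Free (Localization.AtPrime p) (LocalizedModule p.primeCompl (Fin k → R)) :=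
      Module.free_of_isLocalizedModule p.primeCompl (LocalizedModule.mkLinearMap _ _)
    refine free_of_exact_of_socle_element hs hsm
      (K := LocalizedModule p.primeCompl φ.ker) (F := LocalizedModule p.primeCompl (Fin k → R))
      (i := LocalizedModule.map p.primeCompl φ.ker.subtype)
      (g := LocalizedModule.map p.primeCompl φ) ?_ ?_ ?_ ?_
    · exact LocalizedModule.map_injective _ _ φ.ker.injective_subtype
    · exact LocalizedModule.map_surjective _ _ hφ
    · exact LocalizedModule.map_exact _ _ _ φ.exact_subtype_ker_map
    · exact hM.of_isLocalizedModule _ p.primeCompl (LocalizedModule.mkLinearMap _ _)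

theorem not_dvd_algebraMap_localization {R : Type*} [CommRing R] {p : Ideal R} [p.IsPrime]
    {x s : R} (hs : ∀ v ∉ p, ¬ x ∣ v * s) :
    ¬ algebraMap R (Localization.AtPrime p) x ∣ algebraMap R (Localization.AtPrime p) s := by
  rw [← Ideal.mem_span_singleton, ← Set.image_singleton, ← Ideal.map_span,
    IsLocalization.algebraMap_mem_map_algebraMap_iff p.primeCompl]
  rintro ⟨v, hv, hvs⟩
  exact hs v hv (Ideal.mem_span_singleton.mp hvs)

theorem algebraMap_dvd_mul_of_mem_map {R A : Type*} [CommRing R] [CommRing A] [Algebra R A]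
    {c : Ideal R} {x s : R} (hsc : ∀ y ∈ c, x ∣ s * y) {y : A}
    (hy : y ∈ c.map (algebraMap R A)) : algebraMap R A x ∣ algebraMap R A s * y := by
  induction hy using Submodule.span_induction with
  | mem y hy =>
    obtain ⟨r, hr, rfl⟩ := hy
    exact map_mul (algebraMap R A) s r ▸ map_dvd _ (hsc r hr)
  | zero => simp
  | add y z _ _ hy hz => exact mul_add (algebraMap R A s) y z ▸ dvd_add hy hz
  | smul a y _ hy => exact mul_left_comm (algebraMap R A s) a y ▸ hy.mul_left a

theorem nontrivial_localizedModule_ideal {R : Type*} [CommRing R] {c p : Ideal R} [p.IsPrime]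
    {x : R} (hx : IsSMulRegular R x) (hxc : x ∈ c) :
    Nontrivial (LocalizedModule p.primeCompl c) := by
  rw [← not_subsingleton_iff_nontrivial, LocalizedModule.subsingleton_iff]
  intro h
  obtain ⟨r, hr, hrx⟩ := h ⟨x, hxc⟩
  have hrx : x • r = 0 := (mul_comm x r).trans (congrArg Subtype.val hrx)
  exact hr (hx.right_eq_zero_of_smul hrx ▸ p.zero_mem)

theorem exists_smul_eq_smul_localizedModule {R : Type*} [CommRing R] {S : Submonoid R}
    {M : Type*} [AddCommGroup M] [Module R M] {x s : R} (h : ∀ m : M, ∃ m', s • m = x • m')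
    (z : LocalizedModule S M) : ∃ z', algebraMap R (Localization S) s • z =
      algebraMap R (Localization S) x • z' := by
  induction z using LocalizedModule.induction_on with
  | h m t =>
    obtain ⟨m', hm⟩ := h m
    exact ⟨.mk m' t, by
      rw [algebraMap_smul, algebraMap_smul, LocalizedModule.smul'_mk, LocalizedModule.smul'_mk, hm]⟩

theorem not_subsingleton_abelianExt_of_mul_mem {R : Type u} [CommRing R] [IsNoetherianRing R]
    {c p : Ideal R} [p.IsPrime]
    (hc : c.map (algebraMap R (Localization.AtPrime p)) = maximalIdeal (Localization.AtPrime p))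
    {x s : R} (hx : IsSMulRegular R x) (hxc : x ∈ c) (hs : ∀ v ∉ p, ¬ x ∣ v * s)
    (hsc : ∀ y ∈ c, ∃ y' ∈ c, s * y = x * y') (n : ℕ) :
    ¬ Subsingleton (Abelian.Ext.{u} (ModuleCat.of R c) (ModuleCat.of R c) (n + 1)) := by
  intro _
  have hs' := not_dvd_algebraMap_localization hs
  have hsm (y) (hy : y ∈ maximalIdeal (Localization.AtPrime p)) :
      algebraMap R _ x ∣ algebraMap R _ s * y :=
    algebraMap_dvd_mul_of_mem_map (fun r hr ↦ (hsc r hr).imp fun _ ↦ And.right) (hc ▸ hy)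
  have hfree := free_localizedModule_of_subsingleton_abelianExt hc hx hs' hsm n c
    (hx.submodule _ _)
  have := nontrivial_localizedModule_ideal (p := p) hx hxc
  refine hs' (dvd_of_forall_exists_smul_eq_smul (M := LocalizedModule p.primeCompl c)
    (exists_smul_eq_smul_localizedModule fun y ↦ ?_))
  obtain ⟨y', hy', h⟩ := hsc y y.2
  exact ⟨⟨y', hy'⟩, Subtype.ext h⟩

end LocalizedFreeness

section Seminormal

variable {R L : Type*} [CommRing R] [CommRing L] [Algebra R L] [FaithfulSMul R L] [IsReduced L]

theorem mem_range_algebraMap_of_sq_of_cube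
    (h : ∀ b c : R, b ^ 3 = c ^ 2 → ∃ a : R, a ^ 2 = b ∧ a ^ 3 = c) {z : L}
    (h₂ : z ^ 2 ∈ (algebraMap R L).range) (h₃ : z ^ 3 ∈ (algebraMap R L).range) :
    z ∈ (algebraMap R L).range := by
  obtain ⟨b, hb⟩ := h₂
  obtain ⟨c, hc⟩ := h₃
  obtain ⟨a, rfl, rfl⟩ := h b c <| FaithfulSMul.algebraMap_injective R L <| by
    rw [map_pow, map_pow, hb, hc]; ring
  rw [map_pow] at hb hc
  have hnil : (algebraMap R L a - z) ^ 3 = 0 := by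
    linear_combination 4 * hc - 3 * (z + algebraMap R L a) * hb
  exact ⟨a, sub_eq_zero.mp (eq_zero_of_pow_eq_zero hnil)⟩

theorem mem_range_algebraMap_of_forall_pow_mem
    (h : ∀ b c : R, b ^ 3 = c ^ 2 → ∃ a : R, a ^ 2 = b ∧ a ^ 3 = c) {z : L} {n : ℕ}
    (hz : ∀ m ≥ n, z ^ m ∈ (algebraMap R L).range) : z ∈ (algebraMap R L).range := by
  induction n with
  | zero => simpa using hz 1 (by lia)
  | succ n ih =>
    refine ih fun m hm ↦ ?_
    obtain hnm | rfl := hm.lt_or_eq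
    · exact hz m hnm
    · obtain rfl | hn := n.eq_zero_or_pos
      · exact ⟨1, by simp⟩
      · refine mem_range_algebraMap_of_sq_of_cube h ?_ ?_ <;>
          exact pow_mul z n _ ▸ hz _ (by lia)

end Seminormal

section Conductor

open scoped nonZeroDivisors

variable {R : Type} [CommRing R]

theorem intClosureQuot_mk_eq_zero_iff {b : IntClosure R} :
    (Submodule.Quotient.mk b : IntClosureQuot R) = 0 ↔
      (b : FractionRing R) ∈ (algebraMap R (FractionRing R)).range := by
  rw [Submodule.Quotient.mk_eq_zero]
  exact exists_congr fun _ ↦ Subtype.ext_iff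

theorem mem_conductorIdeal_iff {r : R} : r ∈ conductorIdeal R ↔ ∀ b : FractionRing R,
    IsIntegral R b → algebraMap R _ r * b ∈ (algebraMap R (FractionRing R)).range := by
  rw [conductorIdeal, Module.mem_annihilator, (Submodule.Quotient.mk_surjective _).forall]
  simp only [← Submodule.Quotient.mk_smul, intClosureQuot_mk_eq_zero_iff]
  simp [Algebra.smul_def, mem_integralClosure_iff, IntClosure]

theorem exists_mem_conductorIdeal_algebraMap_eq_mul {y : R} (hy : y ∈ conductorIdeal R)
    {b : FractionRing R} (hb : IsIntegral R b) :
    ∃ y' ∈ conductorIdeal R, algebraMap R (FractionRing R) y' = algebraMap R _ y * b := by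
  obtain ⟨y', hy'⟩ := mem_conductorIdeal_iff.mp hy b hb
  refine ⟨y', mem_conductorIdeal_iff.mpr fun d hd ↦ ?_, hy'⟩
  rw [hy', mul_assoc]
  exact mem_conductorIdeal_iff.mp hy _ (hb.mul hd)

theorem isRadical_conductorIdeal [IsReduced R]
    (h : ∀ b c : R, b ^ 3 = c ^ 2 → ∃ a : R, a ^ 2 = b ∧ a ^ 3 = c) :
    (conductorIdeal R).IsRadical := by
  have : IsReduced (FractionRing R) := by unfold FractionRing; infer_instance
  rintro r ⟨n, hn⟩
  refine mem_conductorIdeal_iff.mpr fun b hb ↦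
    mem_range_algebraMap_of_forall_pow_mem h (n := n) fun m hm ↦ ?_
  obtain ⟨k, rfl⟩ := Nat.exists_eq_add_of_le hm
  have hint : IsIntegral R (algebraMap R (FractionRing R) r ^ k * b ^ (n + k)) :=
    (isIntegral_algebraMap.pow k).mul (hb.pow _)
  convert mem_conductorIdeal_iff.mp hn _ hint using 1
  rw [map_pow]; ring

theorem isNormalRing_of_conductorIdeal_eq_top [IsReduced R] (h : conductorIdeal R = ⊤) :
    IsNormalRing R := by
  refine ⟨‹_›, eq_bot_iff.mpr fun b hb ↦ ?_⟩
  obtain ⟨a, ha⟩ := mem_conductorIdeal_iff.mp ((Ideal.eq_top_iff_one _).mp h) b hb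
  exact Algebra.mem_bot.mpr ⟨a, by rw [ha, map_one, one_mul]⟩

section Finite

variable [Module.Finite R (IntClosure R)]

theorem exists_mem_conductorIdeal_mem_nonZeroDivisors : ∃ x ∈ conductorIdeal R, x ∈ R⁰ := by
  have htors : Module.IsTorsion R (IntClosureQuot R) := by
    intro z
    obtain ⟨b, rfl⟩ := Submodule.Quotient.mk_surjective _ z
    obtain ⟨⟨a, x⟩, hx⟩ := IsLocalization.surj R⁰ (b : FractionRing R)
    refine ⟨x, (Submodule.Quotient.mk_smul _ (x : R) b).symm.trans
      (intClosureQuot_mk_eq_zero_iff.mpr ⟨a, ?_⟩)⟩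
    simpa [Algebra.smul_def, mul_comm] using hx.symm
  obtain ⟨x, hx, hx₀⟩ := Submodule.annihilator_top_inter_nonZeroDivisors htors
  exact ⟨x, by rwa [conductorIdeal, ← Submodule.annihilator_top], hx₀⟩

theorem exists_isIntegral_mul_notMem_range {p : Ideal R} [p.IsPrime] (hp : conductorIdeal R ≤ p) :
    ∃ b : FractionRing R, IsIntegral R b ∧
      ∀ v ∉ p, algebraMap R _ v * b ∉ (algebraMap R (FractionRing R)).range := by
  obtain ⟨z, hz⟩ := Module.mem_support_iff'.mp
    ((Module.mem_support_iff_of_finite (M := IntClosureQuot R) (p := ⟨p, ‹_›⟩)).mpr hp)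
  obtain ⟨b, rfl⟩ := Submodule.Quotient.mk_surjective _ z
  refine ⟨b, b.2, fun v hv hvb ↦ hz v hv ?_⟩
  rw [← Submodule.Quotient.mk_smul, intClosureQuot_mk_eq_zero_iff]
  simpa [Algebra.smul_def] using hvb

theorem exists_socle_element_conductorIdeal {p : Ideal R} [p.IsPrime]
    (hp : conductorIdeal R ≤ p) : ∃ x ∈ conductorIdeal R, ∃ s : R, IsSMulRegular R x ∧
      (∀ v ∉ p, ¬ x ∣ v * s) ∧ ∀ y ∈ conductorIdeal R, ∃ y' ∈ conductorIdeal R, s * y = x * y' := by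
  obtain ⟨x, hxc, hx⟩ := exists_mem_conductorIdeal_mem_nonZeroDivisors (R := R)
  obtain ⟨b, hb, hbp⟩ := exists_isIntegral_mul_notMem_range hp
  obtain ⟨s, hs⟩ := mem_conductorIdeal_iff.mp hxc b hb
  have hinj := IsFractionRing.injective R (FractionRing R)
  refine ⟨x, hxc, s, (isRegular_iff_mem_nonZeroDivisors.mpr hx).left.isSMulRegular,
    fun v hv ⟨a, ha⟩ ↦ hbp v hv ⟨a, ?_⟩, fun y hy ↦ ?_⟩
  · refine (IsLocalization.map_units (FractionRing R) (⟨x, hx⟩ : R⁰)).mul_left_cancel ?_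
    rw [← map_mul, ← ha, map_mul, hs, mul_left_comm]
  · obtain ⟨y', hy', h⟩ := exists_mem_conductorIdeal_algebraMap_eq_mul hy hb
    refine ⟨y', hy', hinj ?_⟩
    rw [map_mul, map_mul, hs, h]; ring

end Finite

end Conductor

theorem stmt4_general (R : Type) [CommRing R] [IsNoetherianRing R]
    [Module.Finite R (IntClosure R)]
    (hsn : IsReduced R ∧ ∀ b c : R, b ^ 3 = c ^ 2 → ∃ a : R, a ^ 2 = b ∧ a ^ 3 = c)
    (hext : ∃ i : ℕ, 0 < i ∧
      Subsingleton (ExtMod R ↥(conductorIdeal R) ↥(conductorIdeal R) i)) :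
    Module.Free R ↥(conductorIdeal R) ∧ IsNormalRing R := by
  obtain ⟨hred, hsn⟩ := hsn
  suffices htop : conductorIdeal R = ⊤ by
    refine ⟨?_, isNormalRing_of_conductorIdeal_eq_top htop⟩
    rw [htop]
    exact .of_equiv (Submodule.topEquiv (R := R) (M := R)).symm
  by_contra htop
  obtain ⟨_ | n, hn, hext⟩ := hext
  · contradiction
  obtain ⟨p, hp⟩ := Ideal.nonempty_minimalPrimes htop
  have hprime : p.IsPrime := hp.1.1
  have hmap := map_localization_eq_maximalIdeal_of_mem_minimalPrimes
    (isRadical_conductorIdeal hsn) hp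
  obtain ⟨x, hxc, s, hx, hs, hsc⟩ := exists_socle_element_conductorIdeal hp.1.2
  exact not_subsingleton_abelianExt_of_mul_mem hmap hx hxc hs hsc n
    (subsingleton_abelianExt_succ_of_subsingleton_ext_obj hext)

-- STATEMENT 4
theorem stmt4 (R : Type) [CommRing R] [IsLocalRing R] [IsNoetherianRing R]
    (hau : AnalyticallyUnramified R)
    (hsn : IsReduced R ∧ ∀ b c : R, b ^ 3 = c ^ 2 → ∃ a : R, a ^ 2 = b ∧ a ^ 3 = c)
    (hext : ∃ i : ℕ, 0 < i ∧
      Subsingleton (ExtMod R ↥(conductorIdeal R) ↥(conductorIdeal R) i)) :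
    Module.Free R ↥(conductorIdeal R) ∧ IsNormalRing R := by
  have : IsReduced (AdicCompletion (maximalIdeal R) R) := hau
  have := finite_integralClosure_fractionRing_of_isReduced_adicCompletion R
  exact stmt4_general R hsn hext
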